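/- arXiv:1406.3978 — 5 statements merged into one kernel-verified Lean document; each statement's English description precedes it below -/
import Mathlib

section
/- Let p be a prime number, let F be a finite-dimensional field extension of the p-adic numbers ℚ_p, and let E be a field extension of F of degree 2. Then for all units a, b ∈ F^×, there exist x, y, z ∈ E, not all zero, such that a·x² + b·y² = z². (Equivalently, the quadratic Hilbert symbol (a,b)_E of the local field E is trivial for all a, b ∈ F^×.) -/
set_option linter.unusedSectionVars false

section LocalLemmas
open NormedField Valued

variable {K : Type*} [NontriviallyNormedField K] [IsUltrametricDist K] [ProperSpace K]

theorem HS.compact_int : CompactSpace 𝒪[K] := by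
  rw [← isCompact_univ_iff, Subtype.isCompact_iff]
  simp only [Set.image_univ, Subtype.range_coe_subtype]
  convert isCompact_closedBall (0:K) 1 using 1
  ext x
  simp [Valued.integer.mem_iff]

theorem HS.rankOne : Nonempty (Valuation.RankOne (Valued.v : Valuation K NNReal)) :=
  ⟨inferInstanceAs (Valuation.RankOne (NormedField.valuation (K := K)))⟩

theorem HS.dvr : IsDiscreteValuationRing 𝒪[K] := by
  have := HS.compact_int (K := K)
  have h : (Valued.v : Valuation K NNReal).IsNontrivial :=
    inferInstanceAs (NormedField.valuation (K := K)).IsNontrivial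
  exact Valued.integer.isDiscreteValuationRing_of_compactSpace

theorem HS.finres : Finite 𝓀[K] := by
  have := HS.compact_int (K := K)
  obtain ⟨h⟩ := HS.rankOne (K := K)
  exact (Valued.integer.compactSpace_iff_completeSpace_and_isDiscreteValuationRing_and_finite_residueField.mp this).2.2

theorem HS.exists_unif : ∃ π : K, π ≠ 0 ∧ ‖π‖ < 1 ∧ ∀ x : K, x ≠ 0 → ∃ m : ℤ, ‖x‖ = ‖π‖ ^ m := by
  have := HS.dvr (K := K)
  obtain ⟨ϖ, hϖ⟩ := IsDiscreteValuationRing.exists_irreducible 𝒪[K]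
  have hint : ∀ x : K, x ≠ 0 → ‖x‖ ≤ 1 → ∃ m : ℤ, ‖x‖ = ‖(ϖ : K)‖ ^ m := by
    intro x hx hx1
    obtain ⟨n, u, hu⟩ := IsDiscreteValuationRing.eq_unit_mul_pow_irreducible
      (x := (⟨x, Valued.integer.mem_iff.2 hx1⟩ : 𝒪[K])) (by simpa [Subtype.ext_iff] using hx) hϖ
    have := congrArg (fun z : 𝒪[K] => ‖(z : K)‖) hu
    refine ⟨n, ?_⟩
    simpa using this
  refine ⟨ϖ, ?_, Valued.integer.norm_irreducible_lt_one hϖ, ?_⟩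
  · have := Valued.integer.norm_irreducible_pos hϖ
    exact norm_pos_iff.1 this
  · intro x hx
    rcases le_total ‖x‖ 1 with h | h
    · exact hint x hx h
    · obtain ⟨m, hm⟩ := hint x⁻¹ (inv_ne_zero hx) (by rw [norm_inv]; exact inv_le_one_of_one_le₀ h)
      refine ⟨-m, ?_⟩
      rw [zpow_neg, ← hm, norm_inv, inv_inv]

theorem HS.res_eq_zero (x : 𝒪[K]) : IsLocalRing.residue 𝒪[K] x = 0 ↔ ‖(x : K)‖ < 1 := by
  rw [IsLocalRing.residue_eq_zero_iff, IsLocalRing.mem_maximalIdeal, mem_nonunits_iff,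
    Valued.integer.isUnit_iff_norm_eq_one]
  have := Valued.integer.norm_le_one x
  constructor
  · intro h; exact lt_of_le_of_ne this h
  · intro h; exact ne_of_lt h

end LocalLemmas

section Hensel
variable {K : Type*} [NontriviallyNormedField K] [IsUltrametricDist K] [ProperSpace K]

theorem HS.add_le {x y : K} {r : ℝ} (hx : ‖x‖ ≤ r) (hy : ‖y‖ ≤ r) : ‖x + y‖ ≤ r :=
  (IsUltrametricDist.norm_add_le_max x y).trans (max_le hx hy)
theorem HS.sub_le {x y : K} {r : ℝ} (hx : ‖x‖ ≤ r) (hy : ‖y‖ ≤ r) : ‖x - y‖ ≤ r := by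
  rw [sub_eq_add_neg]; exact HS.add_le hx (by rwa [norm_neg])
theorem HS.add_lt {x y : K} {r : ℝ} (hx : ‖x‖ < r) (hy : ‖y‖ < r) : ‖x + y‖ < r :=
  (IsUltrametricDist.norm_add_le_max x y).trans_lt (max_lt hx hy)
theorem HS.sub_lt {x y : K} {r : ℝ} (hx : ‖x‖ < r) (hy : ‖y‖ < r) : ‖x - y‖ < r := by
  rw [sub_eq_add_neg]; exact HS.add_lt hx (by rwa [norm_neg])
theorem HS.mul_le {x y : K} (hx : ‖x‖ ≤ 1) (hy : ‖y‖ ≤ 1) : ‖x * y‖ ≤ 1 := by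
  rw [norm_mul]; exact mul_le_one₀ hx (norm_nonneg _) hy
theorem HS.mul_lt {x y : K} (hx : ‖x‖ ≤ 1) (hy : ‖y‖ < 1) : ‖x * y‖ < 1 := by
  rw [norm_mul]; exact mul_lt_one_of_nonneg_of_lt_one_right hx (norm_nonneg _) hy
theorem HS.two_le : ‖(2:K)‖ ≤ 1 := by
  have : (2:K) = 1 + 1 := by norm_num
  rw [this]; exact HS.add_le (by simp) (by simp)
theorem HS.eq_one_of_near {x y : K} (hx : ‖x‖ = 1) (hy : ‖y - x‖ < 1) : ‖y‖ = 1 := by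
  apply le_antisymm
  · have : y = (y - x) + x := by ring
    rw [this]; exact HS.add_le hy.le hx.le
  · by_contra h
    push Not at h
    have : x = y - (y - x) := by ring
    rw [this] at hx
    exact absurd hx (HS.sub_lt h hy).ne

/-- Hensel's lemma for monic quadratics, by compactness. -/
theorem HS.hensel (t n x₀ : K) (hf : ‖x₀ ^ 2 - t * x₀ + n‖ < 1) (hd : ‖2 * x₀ - t‖ = 1) :
    ∃ r : K, ‖r - x₀‖ < 1 ∧ r ^ 2 - t * r + n = 0 := by
  set δ := ‖x₀ ^ 2 - t * x₀ + n‖ with hδ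
  have hcont : Continuous fun x : K => ‖x ^ 2 - t * x + n‖ := by fun_prop
  obtain ⟨r, hr, hmin⟩ := (isCompact_closedBall x₀ δ).exists_isMinOn
    ⟨x₀, by simp [hδ]⟩ hcont.continuousOn
  rw [mem_closedBall_iff_norm] at hr
  have hmin' : ∀ x, ‖x - x₀‖ ≤ δ → ‖r ^ 2 - t * r + n‖ ≤ ‖x ^ 2 - t * x + n‖ := by
    intro x hx
    exact hmin (mem_closedBall_iff_norm.2 hx)
  refine ⟨r, hr.trans_lt hf, ?_⟩
  have h1 : ‖r ^ 2 - t * r + n‖ ≤ δ := hmin' x₀ (by simp [hδ])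
  have h2 : ‖2 * r - t‖ = 1 := by
    apply HS.eq_one_of_near hd
    have : 2 * r - t - (2 * x₀ - t) = 2 * (r - x₀) := by ring
    rw [this]; exact HS.mul_lt HS.two_le (hr.trans_lt hf)
  have h2' : 2 * r - t ≠ 0 := by
    intro h; rw [h] at h2; simp at h2
  by_contra hne
  set e := r ^ 2 - t * r + n with he
  set h := e / (2 * r - t) with hh
  have hhe : h * (2 * r - t) = e := by rw [hh]; field_simp
  have hn : ‖h‖ = ‖e‖ := by rw [hh, norm_div, h2, div_one]
  have h3 := hmin' (r - h) (by
    have : r - h - x₀ = (r - x₀) - h := by ring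
    rw [this]; exact HS.sub_le hr (hn ▸ h1))
  have h4 : (r - h) ^ 2 - t * (r - h) + n = h ^ 2 := by
    linear_combination -hhe - he
  rw [h4, norm_pow, hn] at h3
  have h5 : 0 < ‖e‖ := norm_pos_iff.2 hne
  have h6 : ‖e‖ < 1 := h1.trans_lt hf
  nlinarith
end Hensel

section Res
open NormedField Valued
variable {K : Type*} [NontriviallyNormedField K] [IsUltrametricDist K] [ProperSpace K]

/-- separability -/
theorem HS.sep (t n : K) (ht : ‖t‖ ≤ 1) (hn : ‖n‖ ≤ 1)
    (hf : ∀ c : K, ‖c‖ ≤ 1 → 1 ≤ ‖c ^ 2 - t * c + n‖) : ‖t ^ 2 - 4 * n‖ = 1 := by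
  have h4 : ‖(4:K)‖ ≤ 1 := by
    have : (4:K) = 2 * 2 := by norm_num
    rw [this]; exact HS.mul_le HS.two_le HS.two_le
  have hle : ‖t ^ 2 - 4 * n‖ ≤ 1 := HS.sub_le (by rw [sq]; exact HS.mul_le ht ht) (HS.mul_le h4 hn)
  by_contra hne
  have hlt := lt_of_le_of_ne hle hne
  rcases HS.two_le (K := K).eq_or_lt with h2 | h2
  · have h20 : (2:K) ≠ 0 := by intro h; rw [h] at h2; simp at h2
    have := hf (t / 2) (by rw [norm_div, h2, div_one]; exact ht)
    have e : (t/2)^2 - t * (t/2) + n = - (t^2 - 4 * n) / (2 * 2) := by field_simp; ring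
    rw [e, norm_div, norm_mul, h2, norm_neg] at this
    simp at this
    linarith
  · have ht1 : ‖t‖ < 1 := by
      have : ‖t ^ 2‖ < 1 := by
        have e : t ^ 2 = (t ^ 2 - 4 * n) + 2 * n * 2 := by ring
        rw [e]; exact HS.add_lt hlt (HS.mul_lt (HS.mul_le HS.two_le hn) h2)
      rw [norm_pow] at this
      by_contra hc
      push Not at hc
      nlinarith
    have := HS.finres (K := K)
    have hchar : CharP 𝓀[K] 2 := by
      apply CharTwo.of_one_ne_zero_of_two_eq_zero one_ne_zero
      have := (HS.res_eq_zero (1 + 1 : 𝒪[K])).2 (by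
        have e : (((1 + 1 : 𝒪[K])) : K) = 2 := by push_cast; norm_num
        rw [e]; exact h2)
      rw [map_add, map_one] at this
      rw [← this]; norm_num
    have : Fintype 𝓀[K] := Fintype.ofFinite _
    obtain ⟨s, hs⟩ := FiniteField.isSquare_of_char_two (by
      exact (ringChar.eq_iff.2 hchar)) (IsLocalRing.residue 𝒪[K] ⟨n, Valued.integer.mem_iff.2 hn⟩)
    obtain ⟨c, rfl⟩ := IsLocalRing.residue_surjective s
    have hc : ‖(c:K) ^ 2 - n‖ < 1 := by
      have := (HS.res_eq_zero (c ^ 2 - ⟨n, Valued.integer.mem_iff.2 hn⟩)).1 (by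
        rw [map_sub, hs, map_pow]; ring)
      simpa using this
    have h1 := hf c (Valued.integer.norm_le_one c)
    have h3 : (c:K) ^ 2 - t * c + n = (c ^ 2 - n) - c * t + n * 2 := by ring
    rw [h3] at h1
    exact absurd h1 (not_le.2 (HS.add_lt (HS.sub_lt hc (HS.mul_lt (Valued.integer.norm_le_one c) ht1))
      (HS.mul_lt hn h2)))

theorem HS.finite_univ {k : Type*} [Field k] [Finite k] (t n u : k) (hd : t ^ 2 - 4 * n ≠ 0) :
    ∃ x y : k, x ^ 2 - t * x * y + n * y ^ 2 = u := by
  have : Fintype k := Fintype.ofFinite _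
  by_cases h2 : ringChar k = 2
  · obtain ⟨s, hs⟩ := FiniteField.isSquare_of_char_two h2 u
    exact ⟨s, 0, by rw [hs]; ring⟩
  · have h20 : (2:k) ≠ 0 := Ring.two_ne_zero h2
    have ha : n - t ^ 2 / 4 ≠ 0 := by
      intro h
      apply hd
      have h40 : (4:k) ≠ 0 := by
        have : (4:k) = 2 * 2 := by norm_num
        rw [this]; exact mul_ne_zero h20 h20
      field_simp at h
      linear_combination -h
    obtain ⟨x, y, hxy⟩ := FiniteField.exists_root_sum_quadratic (R := k)
      (f := Polynomial.X ^ 2) (g := Polynomial.C (n - t ^ 2 / 4) * Polynomial.X ^ 2 + Polynomial.C 0 * Polynomial.X + Polynomial.C (-u))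
      (by simp) (Polynomial.degree_quadratic ha) (by
        have := FiniteField.odd_card_of_char_ne_two h2
        exact this)
    refine ⟨x + t / 2 * y, y, ?_⟩
    simp at hxy
    have h40 : (4:k) ≠ 0 := by
      have : (4:k) = 2 * 2 := by norm_num
      rw [this]; exact mul_ne_zero h20 h20
    have e : (x + t / 2 * y) ^ 2 - t * (x + t / 2 * y) * y + n * y ^ 2 = x ^ 2 + (n - t ^ 2 / 4) * y ^ 2 := by
      field_simp; ring
    rw [e]; linear_combination hxy

/-- the unramified norm form represents all units -/
theorem HS.units (t n u : K) (ht : ‖t‖ ≤ 1) (hn : ‖n‖ = 1) (hu : ‖u‖ = 1)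
    (hd : ‖t ^ 2 - 4 * n‖ = 1) : ∃ x y : K, x ^ 2 - t * x * y + n * y ^ 2 = u := by
  have := HS.finres (K := K)
  let r := IsLocalRing.residue 𝒪[K]
  let t' : 𝒪[K] := ⟨t, Valued.integer.mem_iff.2 ht⟩
  let n' : 𝒪[K] := ⟨n, Valued.integer.mem_iff.2 hn.le⟩
  let u' : 𝒪[K] := ⟨u, Valued.integer.mem_iff.2 hu.le⟩
  obtain ⟨x, y, hxy⟩ := HS.finite_univ (r t') (r n') (r u') (by
    have : ¬ r (t' ^ 2 - (n' + n' + n' + n')) = 0 := by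
      rw [HS.res_eq_zero]
      have : ‖((t' ^ 2 - (n' + n' + n' + n') : 𝒪[K]) : K)‖ = 1 := by
        rw [← hd]; congr 1; push_cast; simp only [t', n']; ring
      rw [this]; simp
    intro h
    apply this
    rw [← h]
    simp only [map_sub, map_add, map_pow]
    ring)
  obtain ⟨x, rfl⟩ := IsLocalRing.residue_surjective x
  obtain ⟨y, rfl⟩ := IsLocalRing.residue_surjective y
  have h1 : ‖(x:K) ^ 2 - t * x * y + n * y ^ 2 - u‖ < 1 := by
    have := (HS.res_eq_zero (x ^ 2 - t' * x * y + n' * y ^ 2 - u')).1 (by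
      have := sub_eq_zero.2 hxy
      simpa [r] using this)
    simpa [t', n', u'] using this
  obtain ⟨x, hx⟩ := x
  obtain ⟨y, hy⟩ := y
  rw [Valued.integer.mem_iff] at hx hy
  simp only at h1
  have hn0 : n ≠ 0 := by intro h; rw [h] at hn; simp at hn
  have hA : ‖2 * x - t * y‖ ≤ 1 := HS.sub_le (HS.mul_le HS.two_le hx) (HS.mul_le ht hy)
  have hB : ‖2 * n * y - t * x‖ ≤ 1 :=
    HS.sub_le (HS.mul_le (HS.mul_le HS.two_le hn.le) hy) (HS.mul_le ht hx)
  rcases hA.eq_or_lt with hA | hA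
  · obtain ⟨z, -, hz⟩ := HS.hensel (t * y) (n * y ^ 2 - u) x
      (by convert h1 using 2; ring) hA
    exact ⟨z, y, by linear_combination hz⟩
  rcases hB.eq_or_lt with hB | hB
  · obtain ⟨z, -, hz⟩ := HS.hensel (t * x / n) ((x ^ 2 - u) / n) y
      (by
        have : y ^ 2 - t * x / n * y + (x ^ 2 - u) / n = (x ^ 2 - t * x * y + n * y ^ 2 - u) / n := by
          field_simp; ring
        rw [this, norm_div, hn, div_one]; exact h1)
      (by
        have : 2 * y - t * x / n = (2 * n * y - t * x) / n := by field_simp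
        rw [this, norm_div, hn, div_one]; exact hB)
    refine ⟨x, z, ?_⟩
    field_simp at hz
    linear_combination hz
  exfalso
  have h5 : ‖(t ^ 2 - 4 * n) * y‖ < 1 := by
    have : (t ^ 2 - 4 * n) * y = - (t * (2 * x - t * y) + 2 * (2 * n * y - t * x)) := by ring
    rw [this, norm_neg]; exact HS.add_lt (HS.mul_lt ht hA) (HS.mul_lt HS.two_le hB)
  have h6 : ‖(t ^ 2 - 4 * n) * x‖ < 1 := by
    have : (t ^ 2 - 4 * n) * x = - (2 * n * (2 * x - t * y) + t * (2 * n * y - t * x)) := by ring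
    rw [this, norm_neg]
    exact HS.add_lt (HS.mul_lt (HS.mul_le HS.two_le hn.le) hA) (HS.mul_lt ht hB)
  rw [norm_mul, hd, one_mul] at h5 h6
  have h7 : ‖u‖ < 1 := by
    have : u = (x - t * y) * x + (n * y) * y - (x ^ 2 - t * x * y + n * y ^ 2 - u) := by ring
    rw [this]
    exact HS.sub_lt (HS.add_lt (HS.mul_lt (HS.sub_le hx (HS.mul_le ht hy)) h6)
      (HS.mul_lt (HS.mul_le hn.le hy) h5)) h1
  linarith

end Res

section Dist
variable {F V : Type*} [NontriviallyNormedField F] [ProperSpace F] [NormedAddCommGroup V]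
  [NormedSpace F V] [FiniteDimensional F V]

theorem HS.dist (g : V → ℝ) (hg : Continuous g) (hg0 : ∀ v, 0 ≤ g v) (hgz : ∀ v, g v = 0 → v = 0)
    (hs : ∀ (s : F) v, g (s • v) = ‖s‖ ^ 2 * g v) (L : Submodule F V) (hL : L ≠ ⊤) :
    ∃ v, v ∉ L ∧ ∀ l ∈ L, g v ≤ g (v - l) := by
  have : ProperSpace V := FiniteDimensional.proper F V
  obtain ⟨x, hx⟩ : ∃ x, x ∉ L := by
    by_contra h; push Not at h
    exact hL (Submodule.eq_top_iff'.2 h)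
  have hx0 : x ≠ 0 := by rintro rfl; exact hx L.zero_mem
  obtain ⟨c, hc⟩ := NormedField.exists_one_lt_norm F
  have hc0 : 0 < ‖c‖ := by linarith
  -- coercivity
  obtain ⟨m, hm, hco⟩ : ∃ m : ℝ, 0 < m ∧ ∀ v, m * ‖v‖ ^ 2 ≤ g v := by
    let A : Set V := {v | 1 / ‖c‖ ≤ ‖v‖ ∧ ‖v‖ ≤ 1}
    have hA : IsCompact A := by
      refine (isCompact_closedBall (0:V) 1).of_isClosed_subset ?_ ?_
      · exact (isClosed_le continuous_const continuous_norm).inter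
          (isClosed_le continuous_norm continuous_const)
      · intro v hv; simpa using hv.2
    have hre : ∀ v : V, v ≠ 0 → ∃ d : F, d ≠ 0 ∧ d • v ∈ A := by
      intro v hv
      obtain ⟨d, hd, h1, h2, -⟩ := rescale_to_shell hc one_pos hv
      exact ⟨d, hd, h2, h1.le⟩
    obtain ⟨d, -, hd⟩ := hre x hx0
    obtain ⟨w, hw, hmin⟩ := hA.exists_isMinOn ⟨_, hd⟩ hg.continuousOn
    have hgw : 0 < g w := by
      refine lt_of_le_of_ne (hg0 w) (fun h => ?_)
      have := hgz w h.symm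
      rw [this] at hw
      have h1 := hw.1
      rw [norm_zero] at h1
      have : 0 < 1 / ‖c‖ := by positivity
      linarith
    refine ⟨g w, hgw, fun v => ?_⟩
    by_cases hv : v = 0
    · simpa [hv] using hg0 0
    obtain ⟨d, hd0, hd⟩ := hre v hv
    have h1 : g w ≤ g (d • v) := hmin hd
    have h2 := hd.2
    rw [hs] at h1
    rw [norm_smul] at h2
    have h3 : 0 < ‖d‖ := norm_pos_iff.2 hd0
    have h4 : (‖d‖ * ‖v‖) ^ 2 ≤ 1 := pow_le_one₀ (by positivity) h2
    have h5 : ‖d‖ ^ 2 * (g w * ‖v‖ ^ 2) ≤ ‖d‖ ^ 2 * g v := by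
      calc ‖d‖ ^ 2 * (g w * ‖v‖ ^ 2) = g w * (‖d‖ * ‖v‖) ^ 2 := by ring
        _ ≤ g w * 1 := by gcongr
        _ ≤ _ := by linarith
    exact le_of_mul_le_mul_left h5 (by positivity)
  let S : Set V := {v | v - x ∈ L}
  have hS : IsClosed S :=
    (Submodule.closed_of_finiteDimensional L).preimage (continuous_id.sub continuous_const)
  obtain ⟨v, hv, hmin⟩ := hg.continuousOn.exists_isMinOn' (s := S) hS (x₀ := x)
    (by simp [S]) (by
      apply Filter.Eventually.filter_mono inf_le_left
      filter_upwards [(tendsto_norm_cocompact_atTop (E := V)).eventually_ge_atTop (1 + g x / m)] with y hy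
      have h1 : 0 ≤ g x / m := div_nonneg (hg0 x) hm.le
      calc g x = m * (g x / m) := by field_simp
        _ ≤ m * ‖y‖ ^ 2 := by gcongr; nlinarith
        _ ≤ g y := hco y)
  refine ⟨v, ?_, ?_⟩
  · intro h
    apply hx
    have : x = v - (v - x) := by abel
    rw [this]; exact L.sub_mem h hv
  · intro l hl
    apply hmin
    change v - l - x ∈ L
    have : v - l - x = (v - x) - l := by abel
    rw [this]; exact L.sub_mem hv hl

theorem HS.step1 [IsUltrametricDist F] (Q : V → F) (hQ : Continuous Q) (hQz : ∀ v, Q v = 0 → v = 0)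
    (hs : ∀ (s : F) v, Q (s • v) = s ^ 2 * Q v) (hdim : 2 < Module.finrank F V) :
    ∃ v l : V, l ≠ 0 ∧ ‖Q v‖ = ‖Q l‖ ∧ ∀ c : F, ‖c‖ ≤ 1 → ‖Q v‖ ≤ ‖Q (v - c • l)‖ := by
  obtain ⟨π, hπ0, hπ1, hπ⟩ := HS.exists_unif (K := F)
  have hnπ : ‖π‖ ≠ 0 := norm_ne_zero_iff.2 hπ0
  have : Nontrivial V := Module.nontrivial_of_finrank_pos (R := F) (by omega)
  obtain ⟨v₀, hv₀⟩ := exists_ne (0 : V)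
  have hscale : ∀ (k : ℤ) (v : V), ‖Q (π ^ k • v)‖ = ‖π‖ ^ (2 * k) * ‖Q v‖ := by
    intro k v
    rw [hs, norm_mul, norm_pow, norm_zpow, ← zpow_natCast, ← zpow_mul]
    congr 2; push_cast; ring
  have hne : ∀ v : V, v ≠ 0 → Q v ≠ 0 := fun v hv h => hv (hQz v h)
  obtain ⟨v₁, hv₁, hcov⟩ : ∃ v₁ : V, v₁ ≠ 0 ∧ ∀ v, v ≠ 0 → ∃ k : ℤ,
      ‖Q v‖ = ‖Q (π ^ k • v₀)‖ ∨ ‖Q v‖ = ‖Q (π ^ k • v₁)‖ := by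
    by_cases h : ∃ v₁ : V, v₁ ≠ 0 ∧ ∀ k : ℤ, ‖Q v₁‖ ≠ ‖Q (π ^ k • v₀)‖
    · obtain ⟨v₁, hv₁, h⟩ := h
      refine ⟨v₁, hv₁, fun v hv => ?_⟩
      obtain ⟨i0, hi0⟩ := hπ _ (hne _ hv₀)
      obtain ⟨i1, hi1⟩ := hπ _ (hne _ hv₁)
      obtain ⟨i, hi⟩ := hπ _ (hne _ hv)
      simp only [hscale, hi0, hi1, hi, ← zpow_add₀ hnπ] at h ⊢
      have hodd : ¬ ∃ k, i1 = 2 * k + i0 := by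
        rintro ⟨k, hk⟩
        exact h k (by rw [hk])
      have : ∃ k, i = 2 * k + i0 ∨ i = 2 * k + i1 := by
        have h0 : (i1 - i0) % 2 = 1 := by
          by_contra hc
          exact hodd ⟨(i1 - i0) / 2, by omega⟩
        rcases Int.emod_two_eq_zero_or_one (i - i0) with h2 | h2
        · exact ⟨(i - i0) / 2, Or.inl (by omega)⟩
        · exact ⟨(i - i1) / 2, Or.inr (by omega)⟩
      obtain ⟨k, hk | hk⟩ := this
      · exact ⟨k, Or.inl (by rw [hk])⟩
      · exact ⟨k, Or.inr (by rw [hk])⟩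
    · push Not at h
      refine ⟨v₀, hv₀, fun v hv => ?_⟩
      obtain ⟨k, hk⟩ := h v hv
      exact ⟨k, Or.inl hk⟩
  classical
  let L : Submodule F V := Submodule.span F (({v₀, v₁} : Finset V) : Set V)
  have hL : L ≠ ⊤ := by
    intro h
    have h1 : Module.finrank F L ≤ ({v₀, v₁} : Finset V).card := finrank_span_finset_le_card _
    have h2 := Finset.card_le_two (a := v₀) (b := v₁)
    rw [h, finrank_top] at h1
    omega
  obtain ⟨v, hvL, hmin⟩ := HS.dist (F := F) (fun v => ‖Q v‖) (by fun_prop) (fun _ => norm_nonneg _)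
    (fun v h => hQz v (norm_eq_zero.1 h)) (fun s v => by simp [hs]) L hL
  have hv : v ≠ 0 := by rintro rfl; exact hvL L.zero_mem
  obtain ⟨k, hk | hk⟩ := hcov v hv
  · refine ⟨v, π ^ k • v₀, smul_ne_zero (zpow_ne_zero _ hπ0) hv₀, hk, fun c _ => ?_⟩
    exact hmin _ (L.smul_mem _ (L.smul_mem _ (Submodule.subset_span (by simp))))
  · refine ⟨v, π ^ k • v₁, smul_ne_zero (zpow_ne_zero _ hπ0) hv₁, hk, fun c _ => ?_⟩
    exact hmin _ (L.smul_mem _ (L.smul_mem _ (Submodule.subset_span (by simp))))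

end Dist

section Finite
open Polynomial
theorem HS.finite_root {k k' : Type*} [Field k] [Field k'] [Finite k] [Finite k'] [Algebra k k']
    (t n t' n' : k) (ξ : k') (hξ : ∀ c : k, algebraMap k k' c ≠ ξ)
    (hξ' : ξ ^ 2 - algebraMap k k' t' * ξ + algebraMap k k' n' = 0)
    (hf : ∀ c : k, c ^ 2 - t * c + n ≠ 0) :
    ∃ r : k', r ^ 2 - algebraMap k k' t * r + algebraMap k k' n = 0 := by
  have hfd : FiniteDimensional k k' := Module.Finite.of_finite
  have hint : IsIntegral k ξ := Algebra.IsIntegral.isIntegral ξ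
  have key : ∀ t n : k, (X ^ 2 - C t * X + C n : k[X]).natDegree = 2 := by
    intro t n; compute_degree!
  have hmin : (minpoly k ξ).natDegree = 2 := by
    apply le_antisymm
    · rw [← key t' n']
      apply natDegree_le_of_dvd
      · apply minpoly.dvd; simpa using hξ'
      · intro h; have := key t' n'; rw [h] at this; simp at this
    · rw [minpoly.two_le_natDegree_iff hint]
      rintro ⟨c, hc⟩
      exact hξ c hc
  have hdvd : 2 ∣ Module.finrank k k' := by
    rw [← hmin, ← IntermediateField.adjoin.finrank hint]
    exact ⟨_, (Module.finrank_mul_finrank k (IntermediateField.adjoin k {ξ}) k').symm⟩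
  have hmonic : (X ^ 2 - C t * X + C n : k[X]).Monic := by monicity!
  have hirr : Irreducible (X ^ 2 - C t * X + C n : k[X]) := by
    rw [hmonic.irreducible_iff_roots_eq_zero_of_degree_le_three (by rw [key]) (by rw [key]; norm_num)]
    rw [Multiset.eq_zero_iff_forall_notMem]
    intro c hc
    have := (mem_roots'.1 hc).2
    exact hf c (by simpa using this)
  have hd : (X ^ 2 - C t * X + C n : k[X]) ∣ X ^ (Nat.card k) ^ (Module.finrank k k') - X := by
    rw [← hirr.natDegree_dvd_iff_dvd_X_pow_card_pow_sub_X, key]; exact hdvd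
  rw [← Module.natCard_eq_pow_finrank] at hd
  have hfin : Fintype k' := Fintype.ofFinite _
  rw [Nat.card_eq_fintype_card] at hd
  have hsp : Splits ((X ^ Fintype.card k' - X : k[X]).map (algebraMap k k')) :=
    (FiniteField.isSplittingField_sub k' k).splits
  have h0 : ((X ^ Fintype.card k' - X : k[X]).map (algebraMap k k')) ≠ 0 := by
    rw [Polynomial.map_ne_zero_iff (algebraMap k k').injective]
    exact FiniteField.X_pow_card_sub_X_ne_zero k Fintype.one_lt_card
  have hsp' := hsp.of_dvd h0 (Polynomial.map_dvd (algebraMap k k') hd)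
  obtain ⟨r, hr⟩ := hsp'.exists_eval_eq_zero (by
    rw [degree_map, degree_eq_natDegree hmonic.ne_zero, key]; norm_num)
  exact ⟨r, by simpa using hr⟩
end Finite

section Ext
open NormedField Valued
variable {F E : Type*} [NontriviallyNormedField F] [IsUltrametricDist F] [ProperSpace F]
  [NontriviallyNormedField E] [IsUltrametricDist E] [ProperSpace E] [NormedAlgebra F E]

theorem HS.ext_root (t n t' n' : F) (ξ : E) (ht : ‖t‖ ≤ 1) (hn : ‖n‖ ≤ 1) (ht' : ‖t'‖ ≤ 1)
    (hn' : ‖n'‖ ≤ 1) (hξ1 : ‖ξ‖ ≤ 1)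
    (hξ : ∀ c : F, ‖c‖ ≤ 1 → 1 ≤ ‖ξ - algebraMap F E c‖)
    (hξ' : ξ ^ 2 - algebraMap F E t' * ξ + algebraMap F E n' = 0)
    (hf : ∀ c : F, ‖c‖ ≤ 1 → 1 ≤ ‖c ^ 2 - t * c + n‖) :
    ∃ r : E, ‖r‖ ≤ 1 ∧ ‖r ^ 2 - algebraMap F E t * r + algebraMap F E n‖ < 1 := by
  have := HS.finres (K := F)
  have := HS.finres (K := E)
  let φ : 𝒪[F] →+* 𝒪[E] := ((algebraMap F E).comp (Subring.subtype 𝒪[F])).codRestrict 𝒪[E]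
    (fun x => Valued.integer.mem_iff.2 (by
      have := Valued.integer.norm_le_one x
      simpa [norm_algebraMap'] using this))
  have hφ : ∀ x, ((φ x : 𝒪[E]) : E) = algebraMap F E (x : F) := fun x => rfl
  have hloc : IsLocalHom φ := by
    constructor
    intro x hx
    rw [Valued.integer.isUnit_iff_norm_eq_one] at hx ⊢
    have h : ‖((φ x : 𝒪[E]) : E)‖ = 1 := hx
    rw [hφ, norm_algebraMap'] at h
    exact h
  letI alg : Algebra 𝓀[F] 𝓀[E] := (IsLocalRing.ResidueField.map φ).toAlgebra
  have halg : ∀ x : 𝒪[F], algebraMap 𝓀[F] 𝓀[E] (IsLocalRing.residue _ x) = IsLocalRing.residue _ (φ x) :=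
    fun x => IsLocalRing.ResidueField.map_residue φ x
  let T : 𝒪[F] := ⟨t, Valued.integer.mem_iff.2 ht⟩
  let N : 𝒪[F] := ⟨n, Valued.integer.mem_iff.2 hn⟩
  let T' : 𝒪[F] := ⟨t', Valued.integer.mem_iff.2 ht'⟩
  let N' : 𝒪[F] := ⟨n', Valued.integer.mem_iff.2 hn'⟩
  let Ξ : 𝒪[E] := ⟨ξ, Valued.integer.mem_iff.2 hξ1⟩
  obtain ⟨r, hr⟩ := HS.finite_root (IsLocalRing.residue _ T) (IsLocalRing.residue _ N)
    (IsLocalRing.residue _ T') (IsLocalRing.residue _ N') (IsLocalRing.residue _ Ξ)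
    (by
      intro c hc
      obtain ⟨c, rfl⟩ := IsLocalRing.residue_surjective c
      rw [halg, ← sub_eq_zero, ← neg_eq_zero, neg_sub, ← map_sub, HS.res_eq_zero] at hc
      exact absurd hc (not_lt.2 (hξ c (Valued.integer.norm_le_one c))))
    (by
      rw [halg, halg, ← map_pow, ← map_mul, ← map_sub, ← map_add, HS.res_eq_zero]
      have : ((Ξ ^ 2 - φ T' * Ξ + φ N' : 𝒪[E]) : E) = 0 := hξ'
      rw [this]; simp)
    (by
      intro c hc
      obtain ⟨c, rfl⟩ := IsLocalRing.residue_surjective c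
      rw [← map_pow, ← map_mul, ← map_sub, ← map_add, HS.res_eq_zero] at hc
      exact absurd hc (not_lt.2 (hf c (Valued.integer.norm_le_one c))))
  obtain ⟨r, rfl⟩ := IsLocalRing.residue_surjective r
  rw [halg, halg, ← map_pow, ← map_mul, ← map_sub, ← map_add, HS.res_eq_zero] at hr
  exact ⟨r, Valued.integer.norm_le_one r, hr⟩

theorem HS.quad (hE : Module.finrank F E = 2) (x : E) : ∃ t n : F,
    x ^ 2 - algebraMap F E t * x + algebraMap F E n = 0 ∧ ‖n‖ = ‖x‖ ^ 2 ∧ ‖t‖ ≤ ‖x‖ := by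
  have hfd : FiniteDimensional F E := Module.finite_of_finrank_pos (by omega)
  suffices h : ∃ t n : F, x ^ 2 - algebraMap F E t * x + algebraMap F E n = 0 ∧ ‖n‖ = ‖x‖ ^ 2 by
    obtain ⟨t, n, h1, h2⟩ := h
    by_cases hx : x = 0
    · exact ⟨0, 0, by simp [hx], by simp [hx], by simp⟩
    refine ⟨t, n, h1, h2, ?_⟩
    have h3 : algebraMap F E t * x = x ^ 2 + algebraMap F E n := by linear_combination -h1
    have h4 : ‖algebraMap F E t * x‖ ≤ ‖x‖ ^ 2 := by
      rw [h3]; exact HS.add_le (by rw [norm_pow]) (by rw [norm_algebraMap', h2])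
    rw [norm_mul, norm_algebraMap', sq] at h4
    exact le_of_mul_le_mul_right h4 (norm_pos_iff.2 hx)
  have hint : IsIntegral F x := Algebra.IsIntegral.isIntegral x
  by_cases hx : x ∈ (algebraMap F E).range
  · obtain ⟨c, rfl⟩ := hx
    refine ⟨2 * c, c ^ 2, ?_, ?_⟩
    · simp only [map_mul, map_pow, map_ofNat]; ring
    · rw [norm_pow, norm_algebraMap']
  · have h2 : (minpoly F x).natDegree = 2 := by
      apply le_antisymm
      · rw [← hE]; exact minpoly.natDegree_le x
      · exact (minpoly.two_le_natDegree_iff hint).2 hx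
    have h3 := minpoly.aeval F x
    have hm := minpoly.monic hint
    rw [Polynomial.aeval_eq_sum_range, h2] at h3
    simp only [Finset.sum_range_succ, Finset.sum_range_zero] at h3
    have h4 : (minpoly F x).coeff 2 = 1 := by rw [← h2]; exact hm
    refine ⟨-(minpoly F x).coeff 1, (minpoly F x).coeff 0, ?_, ?_⟩
    · rw [h4] at h3
      simp only [Algebra.smul_def, map_one] at h3
      rw [map_neg]
      linear_combination h3
    · have h5 := NormedAlgebra.norm_eq_spectralNorm (K := F) x
      rw [spectralNorm.spectralNorm_eq_norm_coeff_zero_rpow, h2] at h5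
      rw [h5, ← Real.rpow_natCast, ← Real.rpow_mul (norm_nonneg _)]
      norm_num

/-- The unramified norm form represents every element of `F` over `E`, or becomes isotropic. -/
theorem HS.ext_norm (hE : Module.finrank F E = 2) (t n β : F) (ht : ‖t‖ ≤ 1) (hn : ‖n‖ = 1)
    (hβ : β ≠ 0) (hf : ∀ c : F, ‖c‖ ≤ 1 → 1 ≤ ‖c ^ 2 - t * c + n‖) :
    (∃ r : E, r ^ 2 - algebraMap F E t * r + algebraMap F E n = 0) ∨
    ∃ x y : E, x ^ 2 - algebraMap F E t * x * y + algebraMap F E n * y ^ 2 = algebraMap F E β := by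
  have hfd : FiniteDimensional F E := Module.finite_of_finrank_pos (by omega)
  have hd := HS.sep t n ht hn.le hf
  have hdE : ‖(algebraMap F E t) ^ 2 - 4 * algebraMap F E n‖ = 1 := by
    have : (algebraMap F E t) ^ 2 - 4 * algebraMap F E n = algebraMap F E (t ^ 2 - 4 * n) := by
      simp only [map_sub, map_mul, map_pow, map_ofNat]
    rw [this, norm_algebraMap', hd]
  have htE : ‖algebraMap F E t‖ ≤ 1 := by rwa [norm_algebraMap']
  have hnE : ‖algebraMap F E n‖ = 1 := by rwa [norm_algebraMap']
  by_cases hval : ∀ x : E, x ≠ 0 → ∃ c : F, ‖x‖ = ‖c‖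
  · left
    have hL : (Submodule.span F {(1:E)}) ≠ ⊤ := by
      intro h
      have h1 := finrank_span_singleton (K := F) (one_ne_zero (α := E))
      rw [h, finrank_top] at h1
      omega
    obtain ⟨v, hvL, hmin⟩ := HS.dist (F := F) (fun v : E => ‖v‖ ^ 2) (by fun_prop)
      (fun _ => by positivity) (fun v h => by simpa using h)
      (fun s v => by rw [norm_smul, mul_pow]) _ hL
    have hv : v ≠ 0 := by rintro rfl; exact hvL (Submodule.zero_mem _)
    obtain ⟨c, hc⟩ := hval v hv
    have hcn : ‖c‖ ≠ 0 := by rw [← hc]; exact norm_ne_zero_iff.2 hv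
    have hc0 : c ≠ 0 := norm_ne_zero_iff.1 hcn
    have hcE : algebraMap F E c ≠ 0 := by simpa using hc0
    set ξ := v / algebraMap F E c with hξ
    have hξ1 : ‖ξ‖ = 1 := by rw [hξ, norm_div, norm_algebraMap', hc, div_self hcn]
    have hξc : ∀ d : F, ‖d‖ ≤ 1 → 1 ≤ ‖ξ - algebraMap F E d‖ := by
      intro d _
      have h1 := hmin ((d * c) • (1:E)) (Submodule.smul_mem _ _ (Submodule.mem_span_singleton_self _))
      have h2 : v - (d * c) • (1:E) = (ξ - algebraMap F E d) * algebraMap F E c := by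
        rw [Algebra.smul_def, map_mul, hξ]; field_simp
      simp only [h2] at h1
      rw [norm_mul, norm_algebraMap', hc] at h1
      have h3 := le_of_sq_le_sq h1 (by positivity)
      have h4 : 0 < ‖c‖ := lt_of_le_of_ne (norm_nonneg _) hcn.symm
      nlinarith
    obtain ⟨t', n', h1, h2, h3⟩ := HS.quad hE ξ
    rw [hξ1] at h2 h3
    obtain ⟨r, hr1, hr⟩ := HS.ext_root t n t' n' ξ ht hn.le h3 (by rw [h2]; norm_num) hξ1.le hξc h1 hf
    have hder : ‖2 * r - algebraMap F E t‖ = 1 := by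
      have : ‖(2 * r - algebraMap F E t) ^ 2‖ = 1 := by
        apply HS.eq_one_of_near hdE
        have e : (2 * r - algebraMap F E t) ^ 2 - ((algebraMap F E t) ^ 2 - 4 * algebraMap F E n)
          = (2 * 2) * (r ^ 2 - algebraMap F E t * r + algebraMap F E n) := by ring
        rw [e]
        exact HS.mul_lt (HS.mul_le HS.two_le HS.two_le) hr
      rw [norm_pow] at this
      exact (pow_eq_one_iff_of_nonneg (norm_nonneg _) two_ne_zero).1 this
    obtain ⟨z, -, hz⟩ := HS.hensel _ _ r hr hder
    exact ⟨z, hz⟩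
  · right
    push Not at hval
    obtain ⟨P, hP0, hP⟩ := hval
    obtain ⟨π, hπ0, hπ1, hπ⟩ := HS.exists_unif (K := F)
    have hnπ : ‖π‖ ≠ 0 := norm_ne_zero_iff.2 hπ0
    -- every value of F is a square value of E
    obtain ⟨s, hs0, hs⟩ : ∃ s : E, s ≠ 0 ∧ ‖s‖ ^ 2 = ‖β‖ := by
      obtain ⟨t', n', -, h2, -⟩ := HS.quad hE P
      have hn0 : n' ≠ 0 := by
        intro h
        rw [h, norm_zero] at h2
        have : 0 < ‖P‖ := norm_pos_iff.2 hP0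
        have : 0 < ‖P‖ ^ 2 := by positivity
        linarith
      obtain ⟨i, hi⟩ := hπ n' hn0
      obtain ⟨j, hj⟩ := hπ β hβ
      have hodd : i % 2 = 1 := by
        by_contra hc
        apply hP (π ^ (i / 2))
        have h3 : ‖P‖ ^ 2 = ‖π ^ (i / 2)‖ ^ 2 := by
          rw [← h2, hi, norm_zpow, ← zpow_natCast, ← zpow_mul]
          congr 1; push_cast; omega
        exact (pow_left_inj₀ (norm_nonneg _) (norm_nonneg _) two_ne_zero).1 h3
      have hπE : ∀ k : ℤ, ‖algebraMap F E (π ^ k)‖ ^ 2 = ‖π‖ ^ (2 * k) := by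
        intro k
        rw [norm_algebraMap', norm_zpow, ← zpow_natCast, ← zpow_mul]
        congr 1; push_cast; ring
      have hne : ∀ k : ℤ, algebraMap F E (π ^ k) ≠ 0 := fun k => by
        exact (map_ne_zero (algebraMap F E)).2 (zpow_ne_zero k hπ0)
      rcases Int.emod_two_eq_zero_or_one j with h | h
      · refine ⟨algebraMap F E (π ^ (j / 2)), hne _, ?_⟩
        rw [hπE, hj]; congr 1; omega
      · refine ⟨algebraMap F E (π ^ ((j - i) / 2)) * P, mul_ne_zero (hne _) hP0, ?_⟩
        rw [norm_mul, mul_pow, hπE, ← h2, hi, hj, ← zpow_add₀ hnπ]; congr 1; omega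
    obtain ⟨x, y, hxy⟩ := HS.units (algebraMap F E t) (algebraMap F E n)
      (algebraMap F E β / s ^ 2) htE hnE (by
        rw [norm_div, norm_pow, norm_algebraMap', hs, div_self (norm_ne_zero_iff.2 hβ)]) hdE
    refine ⟨x * s, y * s, ?_⟩
    rw [eq_div_iff (pow_ne_zero 2 hs0)] at hxy
    linear_combination hxy

theorem HS.main (hE : Module.finrank F E = 2) (a b : F) (ha : a ≠ 0) (hb : b ≠ 0) :
    ∃ x y z : E, ¬(x = 0 ∧ y = 0 ∧ z = 0) ∧
      algebraMap F E a * x ^ 2 + algebraMap F E b * y ^ 2 = z ^ 2 := by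
  by_cases hiso : ∃ x y z : F, ¬(x = 0 ∧ y = 0 ∧ z = 0) ∧ a * x ^ 2 + b * y ^ 2 = z ^ 2
  · obtain ⟨x, y, z, h, h'⟩ := hiso
    refine ⟨algebraMap F E x, algebraMap F E y, algebraMap F E z, by simpa using h, ?_⟩
    simp only [← map_pow, ← map_mul, ← map_add, h']
  push Not at hiso
  let Q : F × F × F → F := fun v => a * v.1 ^ 2 + b * v.2.1 ^ 2 - v.2.2 ^ 2
  have hQz : ∀ v, Q v = 0 → v = 0 := by
    rintro ⟨x, y, z⟩ h
    by_contra hc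
    refine hiso x y z ?_ (by simp only [Q] at h; linear_combination h)
    intro hx hy hz
    exact hc (by simp [hx, hy, hz])
  obtain ⟨v, l, hl, hvl, hmin⟩ := HS.step1 Q (by fun_prop) hQz
    (fun s v => by simp [Q]; ring) (by simp)
  obtain ⟨v1, v2, v3⟩ := v
  obtain ⟨l1, l2, l3⟩ := l
  have hql0 : Q (l1, l2, l3) ≠ 0 := fun h => hl (hQz _ h)
  set q := Q (l1, l2, l3) with hq
  simp only [Q] at hq
  have hqn : ‖q‖ ≠ 0 := norm_ne_zero_iff.2 hql0
  have hqpos : 0 < ‖q‖ := norm_pos_iff.2 hql0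
  set n := Q (v1, v2, v3) / q with hn
  set t := 2 * (a * v1 * l1 + b * v2 * l2 - v3 * l3) / q with ht
  have hnq : n * q = a * v1 ^ 2 + b * v2 ^ 2 - v3 ^ 2 := by rw [hn, div_mul_cancel₀ _ hql0]
  have htq : t * q = 2 * (a * v1 * l1 + b * v2 * l2 - v3 * l3) := by rw [ht, div_mul_cancel₀ _ hql0]
  have hn1 : ‖n‖ = 1 := by rw [hn, norm_div, hvl, div_self hqn]
  have hQc : ∀ c : F, Q ((v1, v2, v3) - c • (l1, l2, l3)) = q * (c ^ 2 - t * c + n) := by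
    intro c
    simp only [Q, Prod.smul_mk, Prod.mk_sub_mk, smul_eq_mul]
    linear_combination -hnq + c * htq - c ^ 2 * hq
  have hf : ∀ c : F, ‖c‖ ≤ 1 → 1 ≤ ‖c ^ 2 - t * c + n‖ := by
    intro c hc
    have h1 := hmin c hc
    rw [hQc, hvl, norm_mul] at h1
    nlinarith
  have hnoroot : ∀ c : F, c ^ 2 - t * c + n ≠ 0 := by
    intro c hc
    have h1 := hQz _ (by rw [hQc, hc, mul_zero] : Q ((v1, v2, v3) - c • (l1, l2, l3)) = 0)
    rw [sub_eq_zero] at h1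
    have h2 : Q (v1, v2, v3) = c ^ 2 * q := by
      rw [h1, hq]; simp only [Q, Prod.smul_mk, smul_eq_mul]; ring
    have h3 : ‖c‖ ≤ 1 := by
      rw [h2, norm_mul, norm_pow] at hvl
      have : ‖c‖ ^ 2 = 1 := by
        apply mul_right_cancel₀ hqn; rw [hvl, one_mul]
      exact ((pow_eq_one_iff_of_nonneg (norm_nonneg _) two_ne_zero).1 this).le
    have h4 := hf c h3
    rw [hc] at h4
    simp at h4
    linarith
  have ht1 : ‖t‖ ≤ 1 := by
    by_contra hc
    push Not at hc
    have ht0 : t ≠ 0 := by rintro h; rw [h] at hc; simp at hc; linarith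
    obtain ⟨r, -, hr⟩ := HS.hensel (1 : F) (n / t ^ 2) 0 (by
      simp [hn1]
      exact inv_lt_one_of_one_lt₀ (one_lt_pow₀ hc two_ne_zero)) (by simp)
    apply hnoroot (t * r)
    field_simp at hr
    linear_combination hr
  -- the orthogonal vector
  have hcr : ¬ (l2 * v3 - l3 * v2 = 0 ∧ l3 * v1 - l1 * v3 = 0 ∧ l1 * v2 - l2 * v1 = 0) := by
    rintro ⟨h1, h2, h3⟩
    have key : ∀ c : F, v1 = c * l1 → v2 = c * l2 → v3 = c * l3 → False := by
      intro c e1 e2 e3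
      apply hnoroot c
      have : q * (c ^ 2 - t * c + n) = 0 := by
        rw [← hQc]; simp [Q, e1, e2, e3]
      exact (mul_eq_zero.1 this).resolve_left hql0
    by_cases e1 : l1 = 0
    · by_cases e2 : l2 = 0
      · have e3 : l3 ≠ 0 := by rintro e3; exact hl (by simp [e1, e2, e3])
        refine key (v3 / l3) ?_ ?_ ?_ <;> field_simp
        · linear_combination h2
        · linear_combination -h1
      · refine key (v2 / l2) ?_ ?_ ?_ <;> field_simp
        · linear_combination -h3
        · linear_combination h1
    · refine key (v1 / l1) ?_ ?_ ?_ <;> field_simp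
      · linear_combination h3
      · linear_combination -h2
  obtain ⟨w1, hw1⟩ : ∃ w1, a * w1 = l2 * v3 - l3 * v2 := ⟨_, mul_div_cancel₀ _ ha⟩
  obtain ⟨w2, hw2⟩ : ∃ w2, b * w2 = l3 * v1 - l1 * v3 := ⟨_, mul_div_cancel₀ _ hb⟩
  obtain ⟨w3, hw3⟩ : ∃ w3, -w3 = l1 * v2 - l2 * v1 := ⟨_, neg_neg _⟩
  have hw0 : Q (w1, w2, w3) ≠ 0 := by
    intro h
    have h1 := hQz _ h
    simp only [Prod.mk_eq_zero] at h1
    obtain ⟨e1, e2, e3⟩ := h1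
    exact hcr ⟨by rw [← hw1, e1, mul_zero], by rw [← hw2, e2, mul_zero], by rw [← hw3, e3, neg_zero]⟩
  set ω := Q (w1, w2, w3) with hω
  simp only [Q] at hω
  have hlw : a * l1 * w1 + b * l2 * w2 - l3 * w3 = 0 := by
    linear_combination l1 * hw1 + l2 * hw2 + l3 * hw3
  have hvw : a * v1 * w1 + b * v2 * w2 - v3 * w3 = 0 := by
    linear_combination v1 * hw1 + v2 * hw2 + v3 * hw3
  -- sufficient
  have suff : ∀ X Y Z : E, ¬ (X = 0 ∧ Y = 0 ∧ Z = 0) →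
      algebraMap F E q * (X ^ 2 - algebraMap F E t * X * Y + algebraMap F E n * Y ^ 2)
        + algebraMap F E ω * Z ^ 2 = 0 →
      ∃ x y z : E, ¬(x = 0 ∧ y = 0 ∧ z = 0) ∧
      algebraMap F E a * x ^ 2 + algebraMap F E b * y ^ 2 = z ^ 2 := by
    intro X Y Z hXYZ h
    have hωE : algebraMap F E ω ≠ 0 := by simpa using hw0
    have m0 := congrArg (algebraMap F E) hω
    have m1 := congrArg (algebraMap F E) hw1
    have m2 := congrArg (algebraMap F E) hw2
    have m3 := congrArg (algebraMap F E) hw3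
    have m4 := congrArg (algebraMap F E) hlw
    have m5 := congrArg (algebraMap F E) hvw
    have m6 := congrArg (algebraMap F E) hnq
    have m7 := congrArg (algebraMap F E) htq
    have m8 := congrArg (algebraMap F E) hq
    simp only [map_add, map_sub, map_mul, map_pow, map_neg, map_ofNat, map_zero] at m0 m1 m2 m3 m4 m5 m6 m7 m8
    generalize algebraMap F E a = a at *
    generalize algebraMap F E b = b at *
    generalize algebraMap F E q = q at *
    generalize algebraMap F E t = t at *
    generalize algebraMap F E n = n at *
    generalize algebraMap F E ω = ω at *
    generalize algebraMap F E l1 = l1 at *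
    generalize algebraMap F E l2 = l2 at *
    generalize algebraMap F E l3 = l3 at *
    generalize algebraMap F E v1 = v1 at *
    generalize algebraMap F E v2 = v2 at *
    generalize algebraMap F E v3 = v3 at *
    generalize algebraMap F E w1 = w1 at *
    generalize algebraMap F E w2 = w2 at *
    generalize algebraMap F E w3 = w3 at *
    refine ⟨X * l1 - Y * v1 + Z * w1, X * l2 - Y * v2 + Z * w2, X * l3 - Y * v3 + Z * w3, ?_, ?_⟩
    · rintro ⟨e1, e2, e3⟩
      apply hXYZ
      have hZ : ω * Z = 0 := by
        linear_combination a * w1 * e1 + b * w2 * e2 - w3 * e3 + Z * m0 - X * m4 + Y * m5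
      have hX : ω * X = 0 := by
        linear_combination (v2 * w3 - v3 * w2) * e1 + (v3 * w1 - v1 * w3) * e2
          + (v1 * w2 - v2 * w1) * e3 + X * m0 + X * w1 * m1 + X * w2 * m2 + X * w3 * m3
      have hY : ω * Y = 0 := by
        linear_combination (l2 * w3 - l3 * w2) * e1 + (l3 * w1 - l1 * w3) * e2
          + (l1 * w2 - l2 * w1) * e3 + Y * m0 + Y * w1 * m1 + Y * w2 * m2 + Y * w3 * m3
      exact ⟨(mul_eq_zero.1 hX).resolve_left hωE, (mul_eq_zero.1 hY).resolve_left hωE,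
        (mul_eq_zero.1 hZ).resolve_left hωE⟩
    · linear_combination h - X ^ 2 * m8 - Z ^ 2 * m0 + X * Y * m7 - Y ^ 2 * m6 + 2 * X * Z * m4
        - 2 * Y * Z * m5
  rcases HS.ext_norm (E := E) hE t n (-ω / q) ht1 hn1 (div_ne_zero (neg_ne_zero.2 hw0) hql0) hf with
    ⟨r, hr⟩ | ⟨x, y, hxy⟩
  · exact suff r 1 0 (by simp) (by linear_combination (algebraMap F E q) * hr)
  · refine suff x y 1 (by simp) ?_
    rw [hxy, ← map_mul, mul_div_cancel₀ _ hql0, map_neg]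
    ring
end Ext

/-- Let `F` be a finite extension of `ℚ_p` and `E/F` a quadratic extension. Then for all
units `a, b` of `F`, the equation `a·x² + b·y² = z²` has a nonzero solution over `E`;
equivalently, the quadratic Hilbert symbol `(a, b)_E` is trivial for all `a, b ∈ Fˣ`. -/
theorem hilbertSymbol_trivial_of_base_units (p : ℕ) [Fact p.Prime]
    (F E : Type) [Field F] [Algebra ℚ_[p] F] [FiniteDimensional ℚ_[p] F]
    [Field E] [Algebra F E] (hE : Module.finrank F E = 2) (a b : Fˣ) :
    ∃ x y z : E, ¬(x = 0 ∧ y = 0 ∧ z = 0) ∧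
      algebraMap F E (a : F) * x ^ 2 + algebraMap F E (b : F) * y ^ 2 = z ^ 2 := by
  have hfd : FiniteDimensional F E := Module.finite_of_finrank_pos (by omega)
  letI nF : NontriviallyNormedField F := spectralNorm.nontriviallyNormedField ℚ_[p] F
  letI aF : NormedAlgebra ℚ_[p] F := spectralNorm.normedAlgebra ℚ_[p] F
  haveI uF : IsUltrametricDist F :=
    IsUltrametricDist.isUltrametricDist_of_isNonarchimedean_norm
      (isNonarchimedean_spectralNorm (K := ℚ_[p]) (L := F))
  haveI pF : ProperSpace F := FiniteDimensional.proper ℚ_[p] F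
  letI nE : NontriviallyNormedField E := spectralNorm.nontriviallyNormedField F E
  letI aE : NormedAlgebra F E := spectralNorm.normedAlgebra F E
  haveI uE : IsUltrametricDist E :=
    IsUltrametricDist.isUltrametricDist_of_isNonarchimedean_norm
      (isNonarchimedean_spectralNorm (K := F) (L := E))
  haveI pE : ProperSpace E := FiniteDimensional.proper F E
  exact HS.main hE (a : F) (b : F) a.ne_zero b.ne_zero
end

section
/- Let p be an odd prime, n a positive integer, q = p^n, and let k be a finite field with q² elements. Let G = k^× ⋊ ℤ be the semidirect product in which m ∈ ℤ acts on k^× by the m-th power of the automorphism x ↦ x^q. Then the second group cohomology H²(G, ℤ/2ℤ), with ℤ/2ℤ a trivial G-module, is isomorphic as an abelian group to ℤ/2ℤ × ℤ/2ℤ. -/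
open groupCohomology

noncomputable section

/-- The 2-cocycle condition for trivial `ZMod 2` coefficients. -/
def IsTrivCocycle {G : Type} [Group G] (f : G × G → ZMod 2) : Prop :=
  ∀ g h j : G, f (g * h, j) + f (g, h) = f (h, j) + f (g, h * j)

/-- The central extension attached to a 2-cocycle. -/
@[ext]
structure CExt {G : Type} [Group G] (f : G × G → ZMod 2) (hf : IsTrivCocycle f) where
  fst : G
  snd : ZMod 2

namespace CExt

variable {G : Type} [Group G] {f : G × G → ZMod 2} {hf : IsTrivCocycle f}

instance : Mul (CExt f hf) := ⟨fun x y => ⟨x.fst * y.fst, x.snd + y.snd + f (x.fst, y.fst)⟩⟩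
instance : One (CExt f hf) := ⟨⟨1, -f (1, 1)⟩⟩
instance : Inv (CExt f hf) := ⟨fun x => ⟨x.fst⁻¹, -x.snd - f (x.fst⁻¹, x.fst) - f (1, 1)⟩⟩

theorem mul_fst (x y : CExt f hf) : (x * y).fst = x.fst * y.fst := rfl
theorem mul_snd (x y : CExt f hf) : (x * y).snd = x.snd + y.snd + f (x.fst, y.fst) := rfl
theorem one_fst : (1 : CExt f hf).fst = 1 := rfl
theorem one_snd : (1 : CExt f hf).snd = -f (1, 1) := rfl
theorem inv_fst (x : CExt f hf) : (x⁻¹).fst = x.fst⁻¹ := rfl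
theorem inv_snd (x : CExt f hf) :
    (x⁻¹).snd = -x.snd - f (x.fst⁻¹, x.fst) - f (1, 1) := rfl

instance : Group (CExt f hf) :=
  Group.ofLeftAxioms
    (by
      intro x y z
      ext
      · simp [mul_fst, mul_assoc]
      · simp only [mul_fst, mul_snd]
        linear_combination hf x.fst y.fst z.fst)
    (by
      intro x
      ext
      · simp [mul_fst, one_fst]
      · simp only [mul_snd, one_fst, one_snd]
        have := hf 1 1 x.fst
        simp only [one_mul] at this
        linear_combination -this)
    (by
      intro x
      ext
      · simp [mul_fst, inv_fst, one_fst]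
      · simp only [mul_snd, inv_fst, inv_snd, one_snd]
        ring)

/-- The projection to `G`. -/
def proj : CExt f hf →* G where
  toFun := fst
  map_one' := rfl
  map_mul' _ _ := rfl

theorem proj_apply (x : CExt f hf) : proj x = x.fst := rfl

theorem pow_eq (a : G) (n : ℕ) : (⟨a, 0⟩ : CExt f hf) ^ n =
    ⟨a ^ n, -f (1, 1) + ∑ i ∈ Finset.range n, f (a ^ i, a)⟩ := by
  induction n with
  | zero => ext <;> simp [one_fst, one_snd]
  | succ n ih =>
    rw [pow_succ, ih]
    ext
    · simp [mul_fst, pow_succ]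
    · simp only [mul_snd, Finset.sum_range_succ]
      ring

end CExt

section Semi

variable {C : Type} [CommGroup C] (σ : MulAut C)

/-- shorthand for the semidirect product -/
abbrev SG := C ⋊[zpowersHom (MulAut C) σ] Multiplicative ℤ

/-- the generator `t` of `ℤ` -/
def tt : SG σ := SemidirectProduct.inr (Multiplicative.ofAdd 1)

/-- the generator `a`. -/
def aa (a : C) : SG σ := SemidirectProduct.inl a

theorem aa_pow (a : C) (n : ℕ) : aa σ a ^ n = aa σ (a ^ n) := (map_pow _ _ _).symm

theorem tt_mul_aa (a : C) : tt σ * aa σ a = aa σ (σ a) * tt σ := by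
  ext <;> simp [tt, aa]

/-- first invariant -/
def eps1 (a : C) (f : SG σ × SG σ → ZMod 2) : ZMod 2 :=
  ∑ i ∈ Finset.range (orderOf a), f (aa σ a ^ i, aa σ a)

/-- second invariant -/
def eps2 (q : ℕ) (a : C) (f : SG σ × SG σ → ZMod 2) : ZMod 2 :=
  f (tt σ, aa σ a) - f (aa σ a ^ q, tt σ)
    - ∑ i ∈ Finset.range q, f (aa σ a ^ i, aa σ a) + f (1, 1)

theorem split_of_eps {q : ℕ} {a : C} (ha : ∀ x, x ∈ Subgroup.zpowers a)
    (hσ : ∀ x, σ x = x ^ q) (f : SG σ × SG σ → ZMod 2) (hf : IsTrivCocycle f)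
    (h1 : eps1 σ a f = 0) (h2 : eps2 σ q a f = 0) :
    ∃ c : SG σ → ZMod 2, ∀ g h, f (g, h) = c h - c (g * h) + c g := by
  let A : CExt f hf := ⟨aa σ a, 0⟩
  let T : CExt f hf := ⟨tt σ, 0⟩
  have hA : A ^ orderOf a = 1 := by
    rw [CExt.pow_eq]
    ext1
    · rw [aa_pow, pow_orderOf_eq_one]; simp [CExt.one_fst, aa]
    · simp only [CExt.one_snd]
      rw [eps1] at h1
      rw [h1, add_zero]
  let F : C →* CExt f hf := monoidHomOfForallMemZpowers ha (orderOf_dvd_of_pow_eq_one hA)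
  have hFa : F a = A := monoidHomOfForallMemZpowers_apply_gen ha _
  have hTA : SemiconjBy T A (A ^ q) := by
    rw [SemiconjBy, CExt.pow_eq]
    ext1
    · simp only [CExt.mul_fst, T, A, tt_mul_aa, aa_pow, hσ]
    · simp only [CExt.mul_snd, T, A]
      rw [eps2] at h2
      linear_combination h2
  have hTF : ∀ x, SemiconjBy T (F x) (F (σ x)) := by
    intro x
    obtain ⟨i, rfl⟩ := ha x
    have := hTA.zpow_right i
    rw [← zpow_natCast, ← zpow_mul, mul_comm, zpow_mul, zpow_natCast] at this
    simpa [map_zpow, map_pow, hFa, hσ] using this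
  have hTF' : ∀ m : ℤ, ∀ x, SemiconjBy (T ^ m) (F x) (F ((σ ^ m) x)) := by
    intro m
    induction m using Int.induction_on with
    | zero => intro x; simp
    | succ m ih =>
      intro x
      rw [zpow_add_one, zpow_add_one]
      exact SemiconjBy.mul_left (ih _) (hTF x)
    | pred m ih =>
      intro x
      rw [zpow_sub_one, zpow_sub_one]
      refine SemiconjBy.mul_left (ih _) ?_
      have := hTF (σ⁻¹ x)
      rw [MulAut.apply_inv_self] at this
      exact this.inv_symm_left
  let S : SG σ →* CExt f hf := SemidirectProduct.lift F (zpowersHom _ T) (by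
    intro g
    ext1 x
    have := hTF' g.toAdd x
    simp only [MonoidHom.comp_apply, zpowersHom_apply]
    simp only [MulEquiv.coe_toMonoidHom, MulAut.conj_apply]
    rw [this.eq, mul_inv_cancel_right])
  have hS : CExt.proj.comp S = MonoidHom.id _ := by
    apply SemidirectProduct.hom_ext
    · ext1 x
      obtain ⟨i, rfl⟩ := ha x
      have : CExt.proj A = aa σ a := rfl
      simp [S, hFa, this, aa]
    · ext1
      simp [S, CExt.proj_apply, T, tt]
  have hS' : ∀ g, (S g).fst = g := fun g => DFunLike.congr_fun hS g
  refine ⟨fun g => -(S g).snd, fun g h => ?_⟩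
  have := congrArg CExt.snd (map_mul S g h)
  rw [CExt.mul_snd, hS', hS'] at this
  linear_combination -this

theorem eps1_cob {a : C} (he : Even (orderOf a)) (c : SG σ → ZMod 2) :
    eps1 σ a (fun g => c g.2 - c (g.1 * g.2) + c g.1) = 0 := by
  have : ∀ n, ∑ i ∈ Finset.range n, (c (aa σ a) - c (aa σ a ^ i * aa σ a) + c (aa σ a ^ i)) =
      n * c (aa σ a) + c 1 - c (aa σ a ^ n) := by
    intro n
    induction n with
    | zero => simp
    | succ n ih => rw [Finset.sum_range_succ, ih, pow_succ]; push_cast; ring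
  rw [eps1, this, aa_pow, pow_orderOf_eq_one, (ZMod.natCast_eq_zero_iff_even).2 he]
  simp [aa]

theorem eps2_cob {q : ℕ} {a : C} (hσ : ∀ x, σ x = x ^ q) (hq : Odd q) (c : SG σ → ZMod 2) :
    eps2 σ q a (fun g => c g.2 - c (g.1 * g.2) + c g.1) = 0 := by
  have : ∀ n, ∑ i ∈ Finset.range n, (c (aa σ a) - c (aa σ a ^ i * aa σ a) + c (aa σ a ^ i)) =
      n * c (aa σ a) + c 1 - c (aa σ a ^ n) := by
    intro n
    induction n with
    | zero => simp
    | succ n ih => rw [Finset.sum_range_succ, ih, pow_succ]; push_cast; ring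
  rw [eps2]
  simp only [this]
  simp only [tt_mul_aa, aa_pow, hσ, (ZMod.natCast_eq_one_iff_odd).2 hq, mul_one]
  ring

/-- powers of `σ` in terms of units mod `2N`. -/
theorem sigma_zpow {q N : ℕ} [NeZero (2 * N)] (hσ : ∀ x, σ x = x ^ q) (hN : ∀ x : C, x ^ N = 1)
    (u : (ZMod (2 * N))ˣ) (hu : (u : ZMod (2 * N)) = q) (m : ℤ) :
    ∀ r : ℕ, (r : ZMod (2 * N)) = ((u ^ m : (ZMod (2 * N))ˣ) : ZMod (2 * N)) →
      ∀ x, (σ ^ m) x = x ^ r := by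
  have key : ∀ r s : ℕ, (r : ZMod (2 * N)) = s → ∀ x : C, x ^ r = x ^ s := by
    intro r s h x
    rw [ZMod.natCast_eq_natCast_iff] at h
    rw [pow_eq_pow_iff_modEq]
    exact h.of_dvd ((orderOf_dvd_of_pow_eq_one (hN x)).trans (dvd_mul_left _ _))
  induction m using Int.induction_on with
  | zero =>
    intro r hr x
    simpa using (key r 1 (by simpa using hr) x).symm
  | succ m ih =>
    intro r hr x
    rw [zpow_add_one, MulAut.mul_apply, ih _ (ZMod.natCast_zmod_val _), hσ, ← pow_mul]
    apply key
    push_cast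
    rw [ZMod.natCast_zmod_val, hr, zpow_add_one, Units.val_mul, hu]
    ring
  | pred m ih =>
    intro r hr x
    rw [zpow_sub_one, MulAut.mul_apply]
    have hx : (σ⁻¹ x) ^ q = x := by rw [← hσ, MulAut.apply_inv_self]
    conv_rhs => rw [← hx]
    rw [← pow_mul]
    apply ih
    push_cast
    rw [hr, zpow_sub_one, Units.val_mul, ← hu]
    linear_combination ((u ^ (-(m : ℤ)) : (ZMod (2 * N))ˣ) : ZMod (2 * N)) * Units.mul_inv u

theorem exists_data {q : ℕ} {a : C} (ha : ∀ x, x ∈ Subgroup.zpowers a)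
    (hσ : ∀ x, σ x = x ^ q) (hN : q ^ 2 = orderOf a + 1) (hq : Odd q) [NeZero (2 * orderOf a)] :
    ∃ (e : SG σ → ℕ) (χ : SG σ →* (ZMod (2 * orderOf a))ˣ),
      (∀ g : SG σ, a ^ e g = g.left) ∧ (∀ x, χ (aa σ x) = 1) ∧
      (∀ g h : SG σ, e (g * h) ≡ e g + (χ g : ZMod (2 * orderOf a)).val * e h
        [MOD orderOf a]) := by
  have hN0 : 0 < orderOf a := by
    have := NeZero.ne (2 * orderOf a)
    omega
  have hC : ∀ x : C, x ^ orderOf a = 1 := by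
    intro x
    obtain ⟨i, rfl⟩ := ha x
    simp only
    rw [← zpow_natCast, ← zpow_mul, mul_comm, zpow_mul, zpow_natCast, pow_orderOf_eq_one, one_zpow]
  have hfin : IsOfFinOrder a := orderOf_pos_iff.1 hN0
  have he : ∀ x : C, ∃ n : ℕ, a ^ n = x := by
    intro x
    exact (hfin.mem_powers_iff_mem_zpowers).2 (ha x)
  choose e he using he
  have hcop : q.Coprime (2 * orderOf a) := by
    apply Nat.Coprime.mul_right
    · exact (Nat.coprime_two_right).2 hq
    · have h1 : (q ^ 2).Coprime (orderOf a) := by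
        rw [hN]
        simp
      exact Nat.Coprime.coprime_dvd_left (dvd_pow_self q two_ne_zero) h1
  let u := ZMod.unitOfCoprime q hcop
  let χ : SG σ →* (ZMod (2 * orderOf a))ˣ := (zpowersHom _ u).comp SemidirectProduct.rightHom
  refine ⟨fun g => e g.left, χ, fun g => he _, fun x => ?_, fun g h => ?_⟩
  · simp [χ, aa]
  · rw [← pow_eq_pow_iff_modEq, he, pow_add, he, mul_comm _ (e _), pow_mul, he]
    rw [SemidirectProduct.mul_left, zpowersHom_apply]
    congr 1
    apply sigma_zpow σ hσ hC u rfl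
    rw [ZMod.natCast_zmod_val]
    rfl

theorem even_orderOf {q : ℕ} {a : C} (hN : q ^ 2 = orderOf a + 1) (hq : Odd q) :
    Even (orderOf a) := by
  have : Odd (orderOf a + 1) := hN ▸ hq.pow
  rcases Nat.even_or_odd (orderOf a) with h | h
  · exact h
  · exact absurd h.add_one (Nat.not_even_iff_odd.2 this)

theorem unit_odd {N : ℕ} [NeZero (2 * N)] (u : (ZMod (2 * N))ˣ) : Odd (u : ZMod (2 * N)).val := by
  have := ZMod.val_coe_unit_coprime u
  exact Nat.coprime_two_right.1 (Nat.Coprime.coprime_dvd_right (dvd_mul_right _ _) this)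

theorem exists_cocycle_two {q : ℕ} {a : C} (ha : ∀ x, x ∈ Subgroup.zpowers a)
    (hσ : ∀ x, σ x = x ^ q) (hN : q ^ 2 = orderOf a + 1) (hq : Odd q) [NeZero (2 * orderOf a)] :
    ∃ f : SG σ × SG σ → ZMod 2, IsTrivCocycle f ∧ eps1 σ a f = 0 ∧ eps2 σ q a f = 1 := by
  obtain ⟨e, χ, he, -, hmul⟩ := exists_data σ ha hσ hN hq
  have hev := even_orderOf hN hq
  have h2 : ∀ g h, (e (g * h) : ZMod 2) = e g + e h := by
    intro g h
    have := (ZMod.natCast_eq_natCast_iff _ _ _).2 ((hmul g h).of_dvd hev.two_dvd)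
    push_cast at this
    rw [this, (ZMod.natCast_eq_one_iff_odd).2 (unit_odd (χ g)), one_mul]
  have ha1 : (e (aa σ a) : ZMod 2) = 1 := by
    have := he (aa σ a)
    have h3 : a ^ e (aa σ a) = a ^ 1 := by rw [this]; simp [aa]
    rw [pow_eq_pow_iff_modEq] at h3
    have := (ZMod.natCast_eq_natCast_iff _ _ _).2 (h3.of_dvd hev.two_dvd)
    simpa using this
  have hr : ∀ x : C, (aa σ x).right = 1 := fun x => by simp [aa]
  refine ⟨fun g => ((Multiplicative.toAdd g.1.right : ℤ) : ZMod 2) * e g.2, ?_, ?_, ?_⟩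
  · intro g h j
    simp only [SemidirectProduct.mul_right, toAdd_mul, h2]
    push_cast
    ring
  · simp [eps1, aa_pow, hr]
  · simp [eps2, aa_pow, ha1, hr]
    simp [tt]

theorem exists_cocycle_one {q : ℕ} {a : C} (ha : ∀ x, x ∈ Subgroup.zpowers a)
    (hσ : ∀ x, σ x = x ^ q) (hN : q ^ 2 = orderOf a + 1) (hq : Odd q) [NeZero (2 * orderOf a)] :
    ∃ f : SG σ × SG σ → ZMod 2, IsTrivCocycle f ∧ eps1 σ a f = 1 := by
  obtain ⟨e, χ, he, hχ, hmul⟩ := exists_data σ ha hσ hN hq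
  have hev := even_orderOf hN hq
  have hodd : ∀ m : ℕ, Odd m → ((m * orderOf a : ℕ) : ZMod (2 * orderOf a)) = orderOf a := by
    rintro m ⟨r, rfl⟩
    rw [ZMod.natCast_eq_natCast_iff]
    have : (2 * r + 1) * orderOf a = orderOf a + (2 * orderOf a) * r := by ring
    rw [this]
    simp [Nat.ModEq]
  have hN0 : 0 < orderOf a := by
    have := NeZero.ne (2 * orderOf a)
    omega
  let ι : ZMod 2 →+ ZMod (2 * orderOf a) :=
    ZMod.lift 2 ⟨(AddMonoidHom.mulRight (orderOf a : ZMod (2 * orderOf a))).comp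
      (Int.castAddHom _), by
        have := ZMod.natCast_self (2 * orderOf a)
        push_cast at this
        simpa using this⟩
  have hι1 : ι 1 = orderOf a := by
    have := ZMod.lift_coe 2 (A := ZMod (2 * orderOf a)) ⟨(AddMonoidHom.mulRight
      (orderOf a : ZMod (2 * orderOf a))).comp (Int.castAddHom _), by
        have := ZMod.natCast_self (2 * orderOf a)
        push_cast at this
        simpa using this⟩ 1
    simpa [ι] using this
  have hne : (orderOf a : ZMod (2 * orderOf a)) ≠ 0 := by
    rw [Ne, ZMod.natCast_eq_zero_iff]
    intro h
    have := Nat.le_of_dvd hN0 h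
    omega
  have h01 : ∀ x : ZMod 2, x = 0 ∨ x = 1 := by decide
  have hinj : ∀ x y, ι x = ι y → x = y := by
    intro x y h
    rw [← sub_eq_zero, ← map_sub] at h
    rw [← sub_eq_zero]
    rcases h01 (x - y) with h' | h'
    · exact h'
    · rw [h', hι1] at h
      exact absurd h hne
  have hfix : ∀ (g : SG σ) (x : ZMod 2), (χ g : ZMod (2 * orderOf a)) * ι x = ι x := by
    intro g x
    rcases h01 x with rfl | rfl
    · simp
    · have := hodd _ (unit_odd (χ g))
      push_cast at this
      rw [ZMod.natCast_zmod_val] at this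
      rw [hι1, this]
  have hex : ∀ p : SG σ × SG σ, ∃ x : ZMod 2, ι x =
      (χ p.1 : ZMod (2 * orderOf a)) * e p.2 - e (p.1 * p.2) + e p.1 := by
    rintro ⟨g, h⟩
    obtain ⟨c, hc⟩ := (hmul g h).dvd
    refine ⟨(c : ℤ), ?_⟩
    have hl : ι (c : ZMod 2) = c * orderOf a := by
      have : (c : ZMod 2) = c • (1 : ZMod 2) := by simp
      rw [this, map_zsmul, hι1, zsmul_eq_mul]
    rw [hl]
    have := congrArg (Int.cast : ℤ → ZMod (2 * orderOf a)) hc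
    push_cast at this
    rw [ZMod.natCast_zmod_val] at this
    linear_combination -this
  choose f hf using hex
  refine ⟨f, ?_, ?_⟩
  · intro g h j
    apply hinj
    rw [map_add, map_add, ← hfix g (f (h, j)), hf, hf, hf, hf]
    simp only [map_mul, Units.val_mul, mul_assoc]
    ring
  · apply hinj
    have hs : ∀ n, ∑ i ∈ Finset.range n, ι (f (aa σ a ^ i, aa σ a)) =
        n * e (aa σ a) + e 1 - e (aa σ a ^ n) := by
      intro n
      induction n with
      | zero => simp
      | succ n ih =>
        rw [Finset.sum_range_succ, ih, hf, pow_succ, aa_pow, hχ]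
        push_cast
        ring
    have ha1 : Odd (e (aa σ a)) := by
      have := he (aa σ a)
      have h3 : a ^ e (aa σ a) = a ^ 1 := by rw [this]; simp [aa]
      rw [pow_eq_pow_iff_modEq] at h3
      have := (ZMod.natCast_eq_natCast_iff _ _ _).2 (h3.of_dvd hev.two_dvd)
      rw [← ZMod.natCast_eq_one_iff_odd]
      simpa using this
    have := hodd _ ha1
    push_cast at this
    rw [eps1, map_sum, hs, hι1, aa_pow, pow_orderOf_eq_one]
    have h1 : aa σ (1 : C) = 1 := by simp [aa]
    rw [h1]
    linear_combination this

end Semi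

/-- the two invariants as a linear map on cocycles -/
def epsMap {C : Type} [CommGroup C] (σ : MulAut C) (q : ℕ) (a : C) :
    cocycles₂ (Rep.trivial ℤ (SG σ) (ZMod 2)) →ₗ[ℤ] (ZMod 2 × ZMod 2) :=
  AddMonoidHom.toIntLinearMap
  { toFun := fun f => (eps1 σ a f.1, eps2 σ q a f.1)
    map_zero' := by
      ext
      · change ∑ i ∈ Finset.range (orderOf a), (0 : ZMod 2) = 0
        simp
      · change (0 : ZMod 2) - 0 - ∑ i ∈ Finset.range q, 0 + 0 = 0
        simp
    map_add' := by
      intro f g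
      ext
      · change eps1 σ a (fun x => f.1 x + g.1 x) = eps1 σ a f.1 + eps1 σ a g.1
        simp only [eps1]
        rw [Finset.sum_add_distrib]
      · change eps2 σ q a (fun x => f.1 x + g.1 x) = eps2 σ q a f.1 + eps2 σ q a g.1
        simp only [eps2]
        rw [Finset.sum_add_distrib]
        ring }

theorem mem_cocycles_triv {G : Type} [Group G] (f : G × G → ZMod 2) :
    f ∈ cocycles₂ (Rep.trivial ℤ G (ZMod 2)) ↔ IsTrivCocycle f := by
  exact mem_cocycles₂_iff (A := Rep.trivial ℤ G (ZMod 2)) f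

theorem h2_general {C : Type} [CommGroup C] (σ : MulAut C) (q : ℕ) (a : C)
    (ha : ∀ x, x ∈ Subgroup.zpowers a) (hσ : ∀ x, σ x = x ^ q)
    (hN : q ^ 2 = orderOf a + 1) (hq : Odd q) [NeZero (2 * orderOf a)] :
    Nonempty (H2 (Rep.trivial ℤ (SG σ) (ZMod 2)) ≃+ (ZMod 2 × ZMod 2)) := by
  have hsurj : Function.Surjective (epsMap σ q a) := by
    obtain ⟨f, hf, hf1⟩ := exists_cocycle_one σ ha hσ hN hq
    obtain ⟨g, hg, hg1, hg2⟩ := exists_cocycle_two σ ha hσ hN hq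
    let f' : cocycles₂ (Rep.trivial ℤ (SG σ) (ZMod 2)) := ⟨f, (mem_cocycles_triv f).2 hf⟩
    let g' : cocycles₂ (Rep.trivial ℤ (SG σ) (ZMod 2)) := ⟨g, (mem_cocycles_triv g).2 hg⟩
    have hF : epsMap σ q a f' = (1, eps2 σ q a f) := Prod.ext hf1 rfl
    have hG : epsMap σ q a g' = (0, 1) := Prod.ext hg1 hg2
    rintro ⟨x, y⟩
    refine ⟨(x.val : ℤ) • f' + ((y - x * eps2 σ q a f).val : ℤ) • g', ?_⟩
    rw [map_add, map_zsmul, map_zsmul, hF, hG]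
    ext <;> simp
  have hker : LinearMap.ker (H2π (Rep.trivial ℤ (SG σ) (ZMod 2))).hom =
      LinearMap.ker (epsMap σ q a) := by
    ext f
    rw [LinearMap.mem_ker, LinearMap.mem_ker]
    refine (H2π_eq_zero_iff f).trans ?_
    constructor
    · rintro ⟨c, hc⟩
      have hc' : f.1 = fun g => c g.2 - c (g.1 * g.2) + c g.1 := hc.symm
      refine Prod.ext ?_ ?_
      · change eps1 σ a f.1 = 0
        rw [hc']
        exact eps1_cob σ (even_orderOf hN hq) c
      · change eps2 σ q a f.1 = 0
        rw [hc']
        exact eps2_cob σ hσ hq c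
    · intro h
      obtain ⟨c, hc⟩ := split_of_eps σ ha hσ f.1 ((mem_cocycles_triv _).1 f.2)
        (congrArg Prod.fst h) (congrArg Prod.snd h)
      exact ⟨c, funext fun g => (hc g.1 g.2).symm⟩
  have hπ : Function.Surjective (H2π (Rep.trivial ℤ (SG σ) (ZMod 2))).hom :=
    (ModuleCat.epi_iff_surjective _).1 inferInstance
  exact ⟨((LinearMap.quotKerEquivOfSurjective _ hπ).symm.trans
    ((Submodule.quotEquivOfEq _ _ hker).trans
      (LinearMap.quotKerEquivOfSurjective _ hsurj))).toAddEquiv⟩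

/-- For `q = pⁿ` (`p` an odd prime) and `k` the field with `q²` elements, the second
cohomology of `G = kˣ ⋊ ℤ` (where `m ∈ ℤ` acts by the `m`-th power of `x ↦ x^q`) with
trivial coefficients `ℤ/2ℤ` is isomorphic to `ℤ/2ℤ × ℤ/2ℤ`. -/
theorem h2_semidirect_zmod_two (p n : ℕ) (hp : p.Prime) (hodd : Odd p) (hn : 0 < n)
    (k : Type) [Field k] [Fintype k] (hk : Fintype.card k = (p ^ n) ^ 2)
    (σ : MulAut kˣ) (hσ : ∀ x : kˣ, σ x = x ^ (p ^ n)) :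
    Nonempty
      (H2 (Rep.trivial ℤ (kˣ ⋊[zpowersHom (MulAut kˣ) σ] Multiplicative ℤ) (ZMod 2)) ≃+
        (ZMod 2 × ZMod 2)) := by
  obtain ⟨a, ha⟩ := IsCyclic.exists_generator (α := kˣ)
  have ho : orderOf a = (p ^ n) ^ 2 - 1 := by
    rw [orderOf_eq_card_of_forall_mem_zpowers ha, Nat.card_units, Nat.card_eq_fintype_card, hk]
  have hq : 1 < p ^ n := Nat.one_lt_pow hn.ne' hp.one_lt
  have hq2 : 1 < (p ^ n) ^ 2 := Nat.one_lt_pow two_ne_zero hq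
  have : NeZero (2 * orderOf a) := ⟨by omega⟩
  exact h2_general σ (p ^ n) a ha hσ (by omega) hodd.pow
end
end

section
/- Let F be a finite-dimensional field extension of the 2-adic numbers ℚ₂. Then for any two units f₁, f₂ ∈ F^×, there exists a subgroup H of F^× of index 2 containing both f₁ and f₂. -/
/-- A proper subgroup containing all squares lies in a subgroup of index two. -/
lemma aux_index_two {G : Type*} [CommGroup G] (K : Subgroup G) (hK : ∀ x : G, x ^ 2 ∈ K)
    (hne : K ≠ ⊤) : ∃ H : Subgroup G, H.index = 2 ∧ K ≤ H := by
  obtain ⟨g, hg⟩ : ∃ g, g ∉ K := by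
    by_contra! h
    exact hne ((Subgroup.eq_top_iff' K).2 h)
  obtain ⟨M, hKM, hM⟩ := zorn_le_nonempty₀ {L : Subgroup G | K ≤ L ∧ g ∉ L} (by
    intro c hc hchain y hy
    refine ⟨sSup c, ⟨(hc hy).1.trans (le_sSup hy), ?_⟩, fun z hz => le_sSup hz⟩
    rw [Subgroup.mem_sSup_of_directedOn ⟨y, hy⟩ hchain.directedOn]
    rintro ⟨s, hs, hgs⟩
    exact (hc hs).2 hgs) K ⟨le_rfl, hg⟩
  refine ⟨M, ?_, hKM⟩
  have hgM : g ∉ M := hM.prop.2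
  rw [Subgroup.index_eq_two_iff]
  refine ⟨g, fun b => ?_⟩
  by_cases hb : b ∈ M
  · right
    refine ⟨hb, fun h => hgM ?_⟩
    exact (Subgroup.mul_mem_cancel_left M hb).1 h
  · left
    refine ⟨?_, hb⟩
    have hgin : g ∈ M ⊔ Subgroup.zpowers b := by
      by_contra hcon
      have := hM.le_of_ge (y := M ⊔ Subgroup.zpowers b) ⟨hKM.trans le_sup_left, hcon⟩ le_sup_left
      exact hb (this (Subgroup.mem_sup_right (Subgroup.mem_zpowers b)))
    obtain ⟨m, hm, z, hz, hmz⟩ := Subgroup.mem_sup.1 hgin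
    obtain ⟨k, rfl⟩ := Subgroup.mem_zpowers_iff.1 hz
    have hsq : ∀ x : G, x ^ 2 ∈ M := fun x => hKM (hK x)
    have hev : ∀ j : ℤ, b ^ (2 * j) ∈ M := fun j => by
      rw [zpow_mul]; exact M.zpow_mem (by exact_mod_cast hsq b) j
    obtain ⟨j, hj | hj⟩ := Int.even_or_odd' k
    · exact absurd (hmz ▸ M.mul_mem hm (hj ▸ hev j)) hgM
    · have : b * g = m * b ^ (2 * (j + 1)) := by
        rw [← hmz, hj, mul_left_comm, ← zpow_one_add]
        congr 2; ring
      rw [this]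
      exact M.mul_mem hm (hev _)

/-- In a finite commutative group with four elements of order dividing two, the squares have
index at least four. -/
lemma aux_finite {G : Type*} [CommGroup G] [Finite G] (e : Fin 4 → G)
    (he : Function.Injective e) (h2 : ∀ i, e i ^ 2 = 1) :
    4 ≤ (powMonoidHom 2 : G →* G).range.index := by
  set f := (powMonoidHom 2 : G →* G)
  have h1 := f.range.index_mul_card
  have h3 := f.ker.index_mul_card
  rw [Subgroup.index_ker, mul_comm] at h3
  have h4 : f.range.index = Nat.card f.ker :=
    Nat.eq_of_mul_eq_mul_right (Nat.card_pos (α := f.range)) (h1.trans h3.symm)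
  rw [h4]
  have : Function.Injective (fun i => (⟨e i, by simpa [f, MonoidHom.mem_ker] using h2 i⟩ : f.ker)) := by
    intro i j hij
    exact he (by simpa using hij)
  simpa using Nat.card_le_card_of_injective _ this

lemma aux_jac {R O : Type*} [CommRing R] [IsLocalRing R] [CommRing O] [Algebra R O]
    [Algebra.IsIntegral R O] (r : R) (hr : r ∈ IsLocalRing.maximalIdeal R) :
    algebraMap R O r ∈ (⊥ : Ideal O).jacobson := by
  rw [Ideal.jacobson, Ideal.mem_sInf]
  rintro M ⟨-, hM⟩
  have := Ideal.isMaximal_comap_of_isIntegral_of_isMaximal (R := R) M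
  have h := IsLocalRing.eq_maximalIdeal this
  rw [← h] at hr
  exact hr

lemma aux_two_mem : (2 : ℤ_[2]) ∈ IsLocalRing.maximalIdeal ℤ_[2] := by
  rw [PadicInt.maximalIdeal_eq_span_p]
  exact Ideal.mem_span_singleton_self _

lemma aux_units {O : Type*} [CommRing O] [IsDomain O] [CharZero O] [Algebra ℤ_[2] O]
    [Module.Finite ℤ_[2] O] (S : Subgroup Oˣ) (hS : S ≤ (powMonoidHom 2 : Oˣ →* Oˣ).range)
    (hS0 : S.index ≠ 0) : 4 ≤ S.index := by
  have hj : (2 : O) ∈ (⊥ : Ideal O).jacobson := by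
    have h := aux_jac (O := O) (2 : ℤ_[2]) aux_two_mem
    rwa [map_ofNat] at h
  have h2 : ¬ IsUnit (2 : O) := by
    intro h
    have h1 := Ideal.eq_top_of_isUnit_mem _ hj h
    rw [Ideal.jacobson_eq_top_iff] at h1
    exact bot_ne_top h1
  set I : Ideal O := (Ideal.span {(2 : ℤ_[2]) ^ 3}).map (algebraMap ℤ_[2] O) with hI
  have hI8 : I = Ideal.span {(8 : O)} := by
    rw [hI, Ideal.map_span, Set.image_singleton, map_pow, map_ofNat]; norm_num
  have hfin0 : Finite (ℤ_[2] ⧸ Ideal.span {(2 : ℤ_[2]) ^ 3}) := by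
    have := PadicInt.ker_toZModPow (p := 2) 3
    push_cast at this
    rw [← this]
    exact Finite.of_injective _ (RingHom.kerLift_injective (PadicInt.toZModPow (p := 2) 3))
  have hfin : Finite (O ⧸ I) := Module.finite_of_finite (ℤ_[2] ⧸ Ideal.span {(2 : ℤ_[2]) ^ 3})
  have hIj : I ≤ (⊥ : Ideal O).jacobson := by
    rw [hI8, Ideal.span_singleton_le_iff_mem]
    have : (8 : O) = 4 * 2 := by norm_num
    rw [this]; exact Ideal.mul_mem_left _ _ hj
  have hloc := isLocalHom_of_le_jacobson_bot I hIj
  let ψ : Oˣ →* (O ⧸ I)ˣ := Units.map (Ideal.Quotient.mk I).toMonoidHom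
  have hψ : Function.Surjective ψ := by
    intro u
    obtain ⟨x, hx⟩ := Ideal.Quotient.mk_surjective (u : O ⧸ I)
    have hxu : IsUnit x := by
      apply hloc.map_nonunit
      rw [hx]; exact u.isUnit
    refine ⟨hxu.unit, Units.ext ?_⟩
    simpa [ψ] using hx
  have h8 : (8 : O ⧸ I) = 0 := by
    have : Ideal.Quotient.mk I (8 : O) = 0 := by
      rw [Ideal.Quotient.eq_zero_iff_mem, hI8]; exact Ideal.mem_span_singleton_self _
    rwa [map_ofNat] at this
  have hd : ∀ d : O, Ideal.Quotient.mk I d = 0 → ∃ c, d = 8 * c := by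
    intro d hd
    rw [Ideal.Quotient.eq_zero_iff_mem, hI8, Ideal.mem_span_singleton] at hd
    exact hd
  have nu : ∀ c : O, 2 * c ≠ 1 := fun c hc => h2 (IsUnit.of_mul_eq_one _ hc)
  have two0 : (2 : O) ≠ 0 := two_ne_zero
  have n2 : (2 : O ⧸ I) ≠ 0 := by
    intro h
    obtain ⟨c, hc⟩ := hd 2 (by rw [map_ofNat]; exact h)
    exact nu (2 * c) (mul_left_cancel₀ two0 (by linear_combination -hc))
  have n4 : (4 : O ⧸ I) ≠ 0 := by
    intro h
    obtain ⟨c, hc⟩ := hd 4 (by rw [map_ofNat]; exact h)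
    exact nu c (mul_left_cancel₀ two0 (mul_left_cancel₀ two0 (by linear_combination -hc)))
  have n6 : (6 : O ⧸ I) ≠ 0 := by
    intro h
    exact n4 (by linear_combination 2 * h - h8)
  let a : Fin 4 → O ⧸ I := ![1, 3, 5, 7]
  have ha : ∀ i, a i * a i = 1 := by
    intro i
    fin_cases i
    · simp [a]
    · change (3 : O ⧸ I) * 3 = 1
      linear_combination h8
    · change (5 : O ⧸ I) * 5 = 1
      linear_combination 3 * h8
    · change (7 : O ⧸ I) * 7 = 1
      linear_combination 6 * h8
  have hainj : Function.Injective a := by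
    have key : ∀ i j, i < j → a i ≠ a j := by
      intro i j hij h
      fin_cases i <;> fin_cases j <;> simp [a] at hij h
      · exact n2 (by linear_combination -h)
      · exact n4 (by linear_combination -h)
      · exact n6 (by linear_combination -h)
      · exact n2 (by linear_combination -h)
      · exact n4 (by linear_combination -h)
      · exact n2 (by linear_combination -h)
    intro i j h
    rcases lt_trichotomy i j with h' | h' | h'
    · exact absurd h (key _ _ h')
    · exact h'
    · exact absurd h.symm (key _ _ h')
  have hfu : Finite (O ⧸ I)ˣ := inferInstance
  have h4 := aux_finite (fun i => (⟨a i, a i, ha i, ha i⟩ : (O ⧸ I)ˣ))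
    (fun i j h => hainj (by simpa using congrArg Units.val h))
    (fun i => Units.ext (by simpa [pow_two] using ha i))
  have hle : S.map ψ ≤ (powMonoidHom 2 : (O ⧸ I)ˣ →* (O ⧸ I)ˣ).range := by
    rintro _ ⟨x, hx, rfl⟩
    obtain ⟨y, rfl⟩ := hS hx
    exact ⟨ψ y, by simp⟩
  have hdvd := (Subgroup.index_dvd_of_le hle).trans (Subgroup.index_map_dvd S hψ)
  exact h4.trans (Nat.le_of_dvd (Nat.pos_of_ne_zero hS0) hdvd)

/-- Norms of integral units are of norm one. -/
lemma aux_norm (F : Type) [Field F] [Algebra ℚ_[2] F] [Algebra ℤ_[2] F]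
    [IsScalarTower ℤ_[2] ℚ_[2] F] [FiniteDimensional ℚ_[2] F]
    (u : (integralClosure ℤ_[2] F)ˣ) :
    ‖Algebra.norm ℚ_[2] ((u : integralClosure ℤ_[2] F) : F)‖ = 1 := by
  have hle : ∀ x : integralClosure ℤ_[2] F, ‖Algebra.norm ℚ_[2] (x : F)‖ ≤ 1 := by
    intro x
    have h := Algebra.isIntegral_norm (R := ℤ_[2]) ℚ_[2] (x := (x : F)) x.2
    obtain ⟨y, hy⟩ := IsIntegrallyClosed.isIntegral_iff.1 h
    rw [← hy]
    exact y.2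
  have h1 := hle u
  have h2 := hle (u⁻¹ : (integralClosure ℤ_[2] F)ˣ)
  have h3 : ‖Algebra.norm ℚ_[2] ((u : integralClosure ℤ_[2] F) : F)‖ *
      ‖Algebra.norm ℚ_[2] (((u⁻¹ : (integralClosure ℤ_[2] F)ˣ) : integralClosure ℤ_[2] F) : F)‖
        = 1 := by
    rw [← norm_mul, ← map_mul, ← MulMemClass.coe_mul, Units.mul_inv]
    simp
  nlinarith [norm_nonneg (Algebra.norm ℚ_[2] ((u : integralClosure ℤ_[2] F) : F))]

lemma aux_card {G : Type*} [CommGroup G] (f₁ f₂ : G)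
    (h : (powMonoidHom 2 : G →* G).range ⊔ Subgroup.closure {f₁, f₂} = ⊤) :
    (powMonoidHom 2 : G →* G).range.index ≠ 0 ∧ (powMonoidHom 2 : G →* G).range.index ≤ 4 := by
  set S := (powMonoidHom 2 : G →* G).range
  have hred : ∀ (f : G) (k : ℤ), ∃ i : Fin 2, ∃ y : G, f ^ k = f ^ (i : ℕ) * y ^ 2 := by
    intro f k
    obtain ⟨j, hj | hj⟩ := Int.even_or_odd' k
    · refine ⟨0, f ^ j, ?_⟩
      rw [hj, mul_comm, zpow_mul]; simp
    · refine ⟨1, f ^ j, ?_⟩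
      rw [hj, zpow_add, mul_comm 2 j, zpow_mul, mul_comm]; simp
  have hsurj : Function.Surjective
      (fun p : Fin 2 × Fin 2 => ((f₁ ^ (p.1 : ℕ) * f₂ ^ (p.2 : ℕ) : G) : G ⧸ S)) := by
    intro q
    obtain ⟨x, rfl⟩ := QuotientGroup.mk_surjective q
    have hx : x ∈ S ⊔ Subgroup.closure {f₁, f₂} := h ▸ Subgroup.mem_top x
    obtain ⟨_, ⟨s, rfl⟩, t, ht, rfl⟩ := Subgroup.mem_sup.1 hx
    obtain ⟨m, n, rfl⟩ := Subgroup.mem_closure_pair.1 ht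
    obtain ⟨i, y, hy⟩ := hred f₁ m
    obtain ⟨j, z, hz⟩ := hred f₂ n
    refine ⟨(i, j), ?_⟩
    rw [QuotientGroup.eq]
    refine ⟨s * y * z, ?_⟩
    rw [hy, hz]
    simp only [powMonoidHom_apply, mul_pow]
    rw [eq_inv_mul_iff_mul_eq]
    simp only [mul_assoc, mul_comm, mul_left_comm]
  have hf : Finite (G ⧸ S) := Finite.of_surjective _ hsurj
  refine ⟨?_, ?_⟩
  · rw [Subgroup.index]; exact Nat.card_pos.ne'
  · rw [Subgroup.index]; simpa using Nat.card_le_card_of_surjective _ hsurj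

/-- Let `F` be a finite extension of `ℚ₂`. Then any two units `f₁, f₂ ∈ Fˣ` are contained
in a common subgroup of `Fˣ` of index 2. -/
theorem exists_index_two_subgroup_containing (F : Type) [Field F] [Algebra ℚ_[2] F]
    [FiniteDimensional ℚ_[2] F] (f₁ f₂ : Fˣ) :
    ∃ H : Subgroup Fˣ, H.index = 2 ∧ f₁ ∈ H ∧ f₂ ∈ H := by
  let _ : Algebra ℤ_[2] F := ((algebraMap ℚ_[2] F).comp (algebraMap ℤ_[2] ℚ_[2])).toAlgebra
  have : IsScalarTower ℤ_[2] ℚ_[2] F := IsScalarTower.of_algebraMap_eq fun _ => rfl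
  have : CharZero F := charZero_of_injective_algebraMap (algebraMap ℚ_[2] F).injective
  let O := integralClosure ℤ_[2] F
  have : IsNoetherian ℤ_[2] O := IsIntegralClosure.isNoetherian ℤ_[2] ℚ_[2] F O
  have : CharZero O := ⟨fun a b h => by
    have := congrArg (Subtype.val) h
    simpa using this⟩
  set S := (powMonoidHom 2 : Fˣ →* Fˣ).range with hS
  by_cases htop : S ⊔ Subgroup.closure {f₁, f₂} = ⊤
  swap
  · obtain ⟨H, hH, hle⟩ := aux_index_two (S ⊔ Subgroup.closure {f₁, f₂})
      (fun x => Subgroup.mem_sup_left ⟨x, rfl⟩) htop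
    exact ⟨H, hH, hle (Subgroup.mem_sup_right (Subgroup.subset_closure (by simp))),
      hle (Subgroup.mem_sup_right (Subgroup.subset_closure (by simp)))⟩
  exfalso
  obtain ⟨hne, hle⟩ := aux_card f₁ f₂ htop
  rw [← hS] at hne hle
  let φ : Oˣ →* Fˣ := Units.map (O.val : O →* F)
  have hφ : ∀ u, ((φ u : Fˣ) : F) = ((u : O) : F) := fun u => rfl
  have hmul := Subgroup.relIndex_mul_index (H := S) (K := φ.range ⊔ S) le_sup_right
  rw [Subgroup.relIndex_sup_right, ← Subgroup.index_comap] at hmul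
  have h0 : (S.comap φ).index ≠ 0 := fun h => hne (by rw [← hmul, h, zero_mul])
  have h0' : (φ.range ⊔ S).index ≠ 0 := fun h => hne (by rw [← hmul, h, mul_zero])
  have hsq : S.comap φ ≤ (powMonoidHom 2 : Oˣ →* Oˣ).range := by
    intro u hu
    obtain ⟨y, hy⟩ := hu
    have hyF : (y : F) ^ 2 = ((u : O) : F) := by
      have := congrArg Units.val hy
      simpa [hφ] using this
    have hyint : IsIntegral ℤ_[2] (y : F) := by
      refine IsIntegral.of_pow (n := 2) (by norm_num) ?_
      rw [hyF]; exact (u : O).2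
    let y' : O := ⟨y, hyint⟩
    have hy' : y' ^ 2 = (u : O) := Subtype.ext hyF
    have hu' : IsUnit y' := (isUnit_pow_iff (n := 2) (by norm_num)).1 (hy' ▸ u.isUnit)
    exact ⟨hu'.unit, Units.ext (by simpa using hy')⟩
  have h4 := aux_units (S.comap φ) hsq h0
  have hT1 : (φ.range ⊔ S).index = 1 := by
    have : 0 < (φ.range ⊔ S).index := Nat.pos_of_ne_zero h0'
    nlinarith
  have hT : φ.range ⊔ S = ⊤ := Subgroup.index_eq_one.1 hT1
  let N : Fˣ → ℝ := fun x => ‖Algebra.norm ℚ_[2] (x : F)‖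
  have hstep : ∀ x : Fˣ, ∃ y : Fˣ, N x = N y ^ 2 := by
    intro x
    have hx : x ∈ φ.range ⊔ S := hT ▸ Subgroup.mem_top x
    obtain ⟨_, ⟨u, rfl⟩, _, ⟨y, rfl⟩, rfl⟩ := Subgroup.mem_sup.1 hx
    refine ⟨y, ?_⟩
    have := aux_norm F u
    simp only [N, powMonoidHom_apply, Units.val_mul, Units.val_pow_eq_pow_val, map_mul, map_pow,
      norm_mul, norm_pow, hφ]
    rw [this, one_mul]
  have hiter : ∀ k : ℕ, ∀ x : Fˣ, ∃ y : Fˣ, N x = N y ^ (2 ^ k) := by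
    intro k
    induction k with
    | zero => exact fun x => ⟨x, by simp⟩
    | succ k ih =>
      intro x
      obtain ⟨y, hy⟩ := ih x
      obtain ⟨z, hz⟩ := hstep y
      exact ⟨z, by rw [hy, hz, ← pow_mul, pow_succ, mul_comm]⟩
  have h2F : (2 : F) ≠ 0 := two_ne_zero
  set n := Module.finrank ℚ_[2] F with hn
  have hnpos : 0 < n := Module.finrank_pos
  obtain ⟨y, hy⟩ := hiter n (Units.mk0 2 h2F)
  have hN2 : N (Units.mk0 2 h2F) = (2 : ℝ) ^ (-(n : ℤ)) := by
    have h2 : (2 : F) = algebraMap ℚ_[2] F 2 := (map_ofNat _ 2).symm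
    simp only [N, Units.val_mk0]
    rw [h2, Algebra.norm_algebraMap, norm_pow]
    have : ‖(2 : ℚ_[2])‖ = 2⁻¹ := by simpa using Padic.norm_p (p := 2)
    rw [this]; simp [hn]
  have hy0 : Algebra.norm ℚ_[2] (y : F) ≠ 0 := by
    simp
  obtain ⟨v, hv⟩ : ∃ v : ℤ, N y = (2 : ℝ) ^ (-v) :=
    ⟨_, by simpa using Padic.norm_eq_zpow_neg_valuation hy0⟩
  rw [hN2, hv, ← zpow_natCast, ← zpow_mul] at hy
  have hy' := zpow_right_injective₀ (by norm_num : (0 : ℝ) < 2) (by norm_num) hy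
  have hdv : ((2 ^ n : ℕ) : ℤ) ∣ (n : ℤ) := ⟨v, by linarith⟩
  have := Nat.le_of_dvd hnpos (Int.natCast_dvd_natCast.1 hdv)
  exact absurd (Nat.lt_two_pow_self (n := n)) (by omega)
end

section
/- Let F be a finite-dimensional field extension of the 2-adic numbers ℚ₂. Then the quotient group F^×/(F^×)² of the unit group of F by its subgroup of squares has cardinality at least 8. (Equivalently, F^×/(F^×)² is a vector space over ℤ/2ℤ of dimension at least 3.) -/
theorem aux_group {Q : Type} [CommGroup Q] (hsq : ∀ q : Q, q * q = 1) (a b c : Q)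
    (hb : b ≠ 1) (hc : c ≠ 1) (hbc : b * c ≠ 1) (ha : a ≠ 1) (hab : a * b ≠ 1)
    (hac : a * c ≠ 1) (habc : a * b * c ≠ 1) : 8 ≤ Cardinal.mk Q := by
  have inv : ∀ q : Q, q⁻¹ = q := fun q => inv_eq_of_mul_eq_one_left (hsq q)
  have key : ∀ x y : Q, x * y ≠ 1 → x ≠ y := by
    rintro x y h rfl
    exact h (hsq x)
  let g : Bool → Q → Q := fun s q => if s then q else 1
  let f : Bool × Bool × Bool → Q := fun s => g s.1 a * g s.2.1 b * g s.2.2 c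
  have hmul : ∀ (s t : Bool) (q : Q), g s q * g t q = g (xor s t) q := by
    intro s t q
    cases s <;> cases t <;> simp [g, hsq]
  have hf : Function.Injective f := by
    rintro ⟨s1, s2, s3⟩ ⟨t1, t2, t3⟩ h
    by_contra hne
    refine key _ _ ?_ h
    have : f (s1, s2, s3) * f (t1, t2, t3) = f (xor s1 t1, xor s2 t2, xor s3 t3) := by
      simp only [f, ← hmul]
      ac_rfl
    rw [this]
    have h3 : ∀ u v w : Bool, (u || v || w) = true → f (u, v, w) ≠ 1 := by
      intro u v w h
      cases u <;> cases v <;> cases w <;>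
        simp only [f, g, if_true, if_false, mul_one, one_mul, Bool.false_eq_true] <;>
        first | assumption | exact absurd h (by decide)
    apply h3
    have dec : ∀ s1 s2 s3 t1 t2 t3 : Bool, ¬ (s1, s2, s3) = (t1, t2, t3) →
        (xor s1 t1 || xor s2 t2 || xor s3 t3) = true := by decide
    exact dec _ _ _ _ _ _ hne
  have := Cardinal.mk_le_of_injective hf
  simpa [Cardinal.mk_fintype] using this

theorem aux_dvr {R F : Type} [CommRing R] [IsDomain R] [IsDiscreteValuationRing R] [Field F]
    [Algebra R F] [IsFractionRing R F] [Finite (IsLocalRing.ResidueField R)]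
    (h2 : (2 : R) ∈ IsLocalRing.maximalIdeal R) (h20 : (2 : F) ≠ 0) :
    8 ≤ Cardinal.mk (Fˣ ⧸ (powMonoidHom 2 : Fˣ →* Fˣ).range) := by
  -- squares of F lying in R are squares in R
  have descend : ∀ (r : R) (x : F), x ^ 2 = algebraMap R F r → ∃ y : R, y ^ 2 = r := by
    intro r x hx
    have hi : IsIntegral R x := IsIntegral.of_pow (n := 2) (by norm_num) (hx ▸ isIntegral_algebraMap)
    obtain ⟨y, rfl⟩ := IsIntegrallyClosed.isIntegral_iff.1 hi
    exact ⟨y, IsFractionRing.injective R F (by simpa using hx)⟩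
  obtain ⟨p, hp⟩ := IsDiscreteValuationRing.exists_irreducible R
  have hm := (IsDiscreteValuationRing.irreducible_iff_uniformizer p).1 hp
  have hmem : ∀ x : R, x ∈ IsLocalRing.maximalIdeal R ↔ p ∣ x := by
    intro x; rw [hm, Ideal.mem_span_singleton]
  have unit1 : ∀ x : R, p ∣ x → IsUnit (1 + x) := by
    intro x hx
    by_contra h
    have h1 : 1 + x ∈ IsLocalRing.maximalIdeal R := h
    rw [hmem] at h1
    exact hp.not_isUnit (isUnit_of_dvd_one ((dvd_add_left hx).1 h1))
  -- 1 + irreducible is not a square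
  have nsq1 : ∀ q : R, Irreducible q → ∀ y : R, y ^ 2 ≠ 1 + q := by
    intro q hq y hy
    have hqm := (IsDiscreteValuationRing.irreducible_iff_uniformizer q).1 hq
    obtain ⟨d, hd⟩ := (Ideal.mem_span_singleton).1 (hqm ▸ h2)
    have e1 : (y - 1) ^ 2 = q * (1 + d * (1 - y)) := by linear_combination hy + (1 - y) * hd
    have e2 : q ∣ y - 1 := hq.prime.dvd_of_dvd_pow (e1 ▸ dvd_mul_right _ _)
    obtain ⟨e, he⟩ := e2
    have e3 : q * 1 = q * (q * (e * (e + d))) := by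
      have : y = 1 + q * e := by linear_combination he
      subst this
      linear_combination -hy + q * e * hd
    have e4 := mul_left_cancel₀ hq.ne_zero e3
    exact hq.not_isUnit (isUnit_of_dvd_one (e4 ▸ dvd_mul_right _ _))
  -- Artin-Schreier
  obtain ⟨u, hu⟩ : ∃ u : R, ∀ z : R, z ^ 2 + z ≠ u := by
    let φ : IsLocalRing.ResidueField R → IsLocalRing.ResidueField R := fun z => z ^ 2 + z
    have hφ : ¬ Function.Surjective φ := by
      intro hs
      have hi := Finite.injective_iff_surjective.2 hs
      have h2' : (2 : IsLocalRing.ResidueField R) = 0 := by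
        have := (IsLocalRing.residue_eq_zero_iff (2 : R)).2 h2
        rwa [map_ofNat] at this
      have : φ 1 = φ 0 := by
        simp only [φ]
        linear_combination h2'
      exact one_ne_zero (hi this)
    simp only [Function.Surjective, not_forall, not_exists] at hφ
    obtain ⟨v, hv⟩ := hφ
    obtain ⟨u, rfl⟩ := IsLocalRing.residue_surjective v
    refine ⟨u, fun z hz => hv (IsLocalRing.residue R z) ?_⟩
    simp [φ, ← hz]
  have nsq2 : ∀ y : R, y ^ 2 ≠ 1 + 4 * u := by
    intro y hy
    have hyF : (algebraMap R F y) ^ 2 = 1 + 4 * algebraMap R F u := by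
      rw [← map_pow, hy, map_add, map_one, map_mul, map_ofNat]
    let z : F := (algebraMap R F y - 1) / 2
    have hz : z ^ 2 + z = algebraMap R F u := by
      have : 2 * z = algebraMap R F y - 1 := by simp only [z]; field_simp
      have h4 : (4 : F) ≠ 0 := by
        have : (4 : F) = 2 * 2 := by norm_num
        rw [this]; exact mul_ne_zero h20 h20
      apply mul_left_cancel₀ h4
      linear_combination hyF + (2 * z + algebraMap R F y + 1) * this
    have hi : IsIntegral R z := by
      refine ⟨Polynomial.X ^ 2 + Polynomial.X - Polynomial.C u, by monicity!, ?_⟩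
      simp [hz]
    obtain ⟨w, hw⟩ := IsIntegrallyClosed.isIntegral_iff.1 hi
    refine hu w (IsFractionRing.injective R F ?_)
    rw [← hz, ← hw]; simp
  obtain ⟨d, hd⟩ := (hmem 2).1 h2
  have hirr : ∀ w : R, IsUnit w → Irreducible (p * w) := fun w hw =>
    (irreducible_mul_isUnit hw).2 hp
  have nsqp : ∀ w : R, IsUnit w → ∀ y : R, y ^ 2 ≠ p * w := by
    intro w hw y hy
    exact (hirr w hw).not_isSquare ⟨y, by rw [← hy, sq]⟩
  have ub : IsUnit (1 + p) := unit1 _ dvd_rfl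
  have uc : IsUnit (1 + 4 * u) := unit1 _ ⟨2 * d * u, by linear_combination 2 * u * hd⟩
  have nsq3 : ∀ y : R, y ^ 2 ≠ (1 + p) * (1 + 4 * u) := by
    intro y hy
    refine nsq1 (p * (1 + p * (d ^ 2 * u * (1 + p)))) (hirr _ (unit1 _ (dvd_mul_right _ _))) y ?_
    rw [hy]
    linear_combination (2 + p * d) * u * (1 + p) * hd
  have hne : ∀ r : R, r ≠ 0 → algebraMap R F r ≠ 0 := fun r hr => by
    simpa using hr
  let A : Fˣ := Units.mk0 _ (hne p hp.ne_zero)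
  let B : Fˣ := Units.mk0 _ (hne _ ub.ne_zero)
  let C : Fˣ := Units.mk0 _ (hne _ uc.ne_zero)
  have main : ∀ (x : Fˣ) (r : R), (x : F) = algebraMap R F r → (∀ y : R, y ^ 2 ≠ r) →
      (QuotientGroup.mk x : Fˣ ⧸ (powMonoidHom 2 : Fˣ →* Fˣ).range) ≠ 1 := by
    intro x r hx hr h
    rw [QuotientGroup.eq_one_iff] at h
    obtain ⟨t, ht⟩ := h
    obtain ⟨y, hy⟩ := descend r (t : F) (by rw [← hx, ← ht]; simp)
    exact hr y hy
  refine aux_group ?_ (QuotientGroup.mk A) (QuotientGroup.mk B) (QuotientGroup.mk C)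
    ?_ ?_ ?_ ?_ ?_ ?_ ?_
  · intro q
    obtain ⟨x, rfl⟩ := QuotientGroup.mk_surjective q
    rw [← QuotientGroup.mk_mul, QuotientGroup.eq_one_iff]
    exact ⟨x, by simp [sq]⟩
  · exact main B (1 + p) rfl (nsq1 p hp)
  · exact main C _ rfl nsq2
  · exact main (B * C) ((1 + p) * (1 + 4 * u)) (by rw [map_mul]; rfl) nsq3
  · exact main A (p * 1) (by rw [mul_one]; rfl) (nsqp 1 isUnit_one)
  · exact main (A * B) (p * (1 + p)) (by rw [map_mul]; rfl) (nsqp _ ub)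
  · exact main (A * C) (p * (1 + 4 * u)) (by rw [map_mul]; rfl) (nsqp _ uc)
  · exact main (A * B * C) (p * ((1 + p) * (1 + 4 * u)))
      (by rw [map_mul, map_mul, ← mul_assoc]; rfl) (nsqp _ (ub.mul uc))

/-- Let `F` be a finite extension of `ℚ₂`. Then `Fˣ/(Fˣ)²` has cardinality at least 8
(equivalently, it is an `𝔽₂`-vector space of dimension at least 3). -/
theorem card_units_mod_squares_ge_eight (F : Type) [Field F] [Algebra ℚ_[2] F]
    [FiniteDimensional ℚ_[2] F] :
    8 ≤ Cardinal.mk (Fˣ ⧸ (powMonoidHom 2 : Fˣ →* Fˣ).range) := by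
  let _ : Algebra ℤ_[2] F := ((algebraMap ℚ_[2] F).comp (algebraMap ℤ_[2] ℚ_[2])).toAlgebra
  have : IsScalarTower ℤ_[2] ℚ_[2] F := IsScalarTower.of_algebraMap_eq (fun _ => rfl)
  have hinj : Function.Injective (algebraMap ℤ_[2] F) :=
    (algebraMap ℚ_[2] F).injective.comp (IsFractionRing.injective ℤ_[2] ℚ_[2])
  have h20 : (2 : F) ≠ 0 := by
    have := (map_ne_zero (algebraMap ℚ_[2] F)).2 (two_ne_zero (α := ℚ_[2]))
    rwa [map_ofNat] at this
  let O := integralClosure ℤ_[2] F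
  have : IsFractionRing O F := integralClosure.isFractionRing_of_finite_extension ℚ_[2] F
  have : IsDedekindDomain O := integralClosure.isDedekindDomain ℤ_[2] ℚ_[2] F
  have : Module.Finite ℤ_[2] O := IsIntegralClosure.finite ℤ_[2] ℚ_[2] F O
  obtain ⟨P, hP⟩ := Ideal.exists_maximal O
  have hcm : (P.comap (algebraMap ℤ_[2] O)).IsMaximal :=
    Ideal.isMaximal_comap_of_isIntegral_of_isMaximal P
  have hcomap : P.comap (algebraMap ℤ_[2] O) = IsLocalRing.maximalIdeal ℤ_[2] :=
    IsLocalRing.eq_maximalIdeal hcm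
  have : P.LiesOver (IsLocalRing.maximalIdeal ℤ_[2]) := ⟨hcomap.symm⟩
  have h2P : (2 : O) ∈ P := by
    have : (2 : ℤ_[2]) ∈ P.comap (algebraMap ℤ_[2] O) := by
      rw [hcomap, PadicInt.maximalIdeal_eq_span_p]
      exact Ideal.mem_span_singleton_self _
    rwa [Ideal.mem_comap, map_ofNat] at this
  have hPbot : P ≠ ⊥ := by
    rintro rfl
    have h : (2 : O) = 0 := h2P
    exact h20 (by rw [← map_ofNat (algebraMap O F) 2, h, map_zero])
  have : Finite (ℤ_[2] ⧸ IsLocalRing.maximalIdeal ℤ_[2]) :=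
    Finite.of_equiv (ZMod 2) (PadicInt.residueField (p := 2)).symm.toEquiv
  have : Module.Finite (ℤ_[2] ⧸ IsLocalRing.maximalIdeal ℤ_[2]) (O ⧸ P) :=
    Module.Finite.of_restrictScalars_finite ℤ_[2] _ _
  have : Finite (O ⧸ P) := Module.finite_of_finite (ℤ_[2] ⧸ IsLocalRing.maximalIdeal ℤ_[2])
  let R := Localization.AtPrime P
  have : IsDiscreteValuationRing R :=
    IsLocalization.AtPrime.isDiscreteValuationRing_of_dedekind_domain O hPbot R
  have hunit : ∀ y : P.primeCompl, IsUnit (algebraMap O F y) := by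
    rintro ⟨y, hy⟩
    refine IsUnit.mk0 _ ?_
    intro h
    have : y = 0 := IsFractionRing.injective O F (by simpa using h)
    exact hy (this ▸ P.zero_mem)
  let _ : Algebra R F := (IsLocalization.lift (M := P.primeCompl) (S := R) hunit).toAlgebra
  have : IsScalarTower O R F := IsScalarTower.of_algebraMap_eq
    (fun x => (IsLocalization.lift_eq hunit x).symm)
  have : IsFractionRing R F :=
    IsFractionRing.isFractionRing_of_isDomain_of_isLocalization P.primeCompl R F
  have : Finite (IsLocalRing.ResidueField R) := inferInstanceAs (Finite P.ResidueField)
  refine aux_dvr (R := R) (F := F) ?_ h20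
  have := (IsLocalization.AtPrime.to_map_mem_maximal_iff R P (2 : O)).2 h2P
  rwa [map_ofNat] at this
end

section
/- Let p be an odd prime, n a positive integer, q = p^n, and let k be a finite field with q² elements. Let G = k^× ⋊ ℤ be the semidirect product in which m ∈ ℤ acts on k^× by the m-th power of the automorphism x ↦ x^q. Then H²(G, ℂ^×), with ℂ^× a trivial G-module, is isomorphic as an abelian group to ℤ/(q−1)ℤ. -/
open groupCohomology

noncomputable section

/-- The twisted product `M × G` attached to a (multiplicative) 2-cocycle. -/
structure TExt {G M : Type} (f : G → G → M) where
  fst : M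
  snd : G

namespace TExt

variable {G M : Type} [Group G] [CommGroup M] (f : G → G → M)

theorem ext' {f : G → G → M} {a b : TExt f} (h1 : a.fst = b.fst) (h2 : a.snd = b.snd) :
    a = b := by
  cases a; cases b; simp_all

/-- The group structure. -/
def group (hf : ∀ g h j, f (g * h) j * f g h = f h j * f g (h * j)) : Group (TExt f) :=
  letI : Mul (TExt f) := ⟨fun a b => ⟨a.fst * b.fst * f a.snd b.snd, a.snd * b.snd⟩⟩
  letI : One (TExt f) := ⟨⟨(f 1 1)⁻¹, 1⟩⟩
  letI : Inv (TExt f) := ⟨fun a => ⟨a.fst⁻¹ * (f a.snd⁻¹ a.snd)⁻¹ * (f 1 1)⁻¹, a.snd⁻¹⟩⟩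
  Group.ofLeftAxioms
    (by
      intro a b c
      refine ext' ?_ (mul_assoc _ _ _)
      change (a.fst * b.fst * f a.snd b.snd) * c.fst * f (a.snd * b.snd) c.snd
        = a.fst * (b.fst * c.fst * f b.snd c.snd) * f a.snd (b.snd * c.snd)
      have := hf a.snd b.snd c.snd
      calc _ = a.fst * b.fst * c.fst * (f (a.snd * b.snd) c.snd * f a.snd b.snd) := by
              simp only [mul_comm, mul_left_comm, mul_assoc]
        _ = _ := by rw [this]; simp only [mul_comm, mul_left_comm, mul_assoc])
    (by
      intro a
      refine ext' ?_ (one_mul _)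
      change (f 1 1)⁻¹ * a.fst * f 1 a.snd = a.fst
      have := hf 1 1 a.snd
      simp only [one_mul] at this
      have h2 := mul_left_cancel this
      rw [← h2, mul_comm (f 1 1)⁻¹, inv_mul_cancel_right])
    (by
      intro a
      refine ext' ?_ (inv_mul_cancel _)
      change a.fst⁻¹ * (f a.snd⁻¹ a.snd)⁻¹ * (f 1 1)⁻¹ * a.fst * f a.snd⁻¹ a.snd = (f 1 1)⁻¹
      rw [mul_assoc, mul_comm _ (a.fst * _), ← mul_assoc, ← mul_assoc,
        mul_assoc _ _ (a.fst⁻¹)]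
      simp [mul_comm, mul_left_comm, mul_assoc])

end TExt

theorem cocycle_one {G M : Type} [Group G] [CommGroup M] (f : G → G → M)
    (hf : ∀ g h j, f (g * h) j * f g h = f h j * f g (h * j)) (g : G) :
    f 1 g = f 1 1 ∧ f g 1 = f 1 1 := by
  constructor
  · have := hf 1 1 g
    simp only [one_mul] at this
    exact (mul_left_cancel this).symm
  · have := hf g 1 1
    simp only [mul_one] at this
    exact mul_right_cancel this

/-- Abstract form of the central extension attached to a cocycle. -/
theorem exists_ext {G M : Type} [Group G] [CommGroup M] (f : G → G → M)
    (hf : ∀ g h j, f (g * h) j * f g h = f h j * f g (h * j)) :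
    ∃ (E : Type) (_ : Group E) (Z : M →* E) (π : E →* G),
      Function.Injective Z ∧ (∀ a e, Z a * e = e * Z a) ∧ Function.Surjective π ∧
      (∀ e e', π e = π e' → ∃ a, e = Z a * e') ∧ (∀ a, π (Z a) = 1) ∧
      (∀ e e', π e * π e' = π e' * π e →
        e * e' = Z (f (π e) (π e') * (f (π e') (π e))⁻¹) * (e' * e)) ∧
      ((∃ s : G →* E, ∀ g, π (s g) = g) →
        ∃ x : G → M, ∀ g h, x h * (x (g * h))⁻¹ * x g = f g h) := by
  letI := TExt.group f hf
  have h1 := fun g => (cocycle_one f hf g).1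
  have h2 := fun g => (cocycle_one f hf g).2
  have mfst : ∀ a b : TExt f, (a * b).fst = a.fst * b.fst * f a.snd b.snd := fun _ _ => rfl
  have msnd : ∀ a b : TExt f, (a * b).snd = a.snd * b.snd := fun _ _ => rfl
  have ofst : (1 : TExt f).fst = (f 1 1)⁻¹ := rfl
  have osnd : (1 : TExt f).snd = 1 := rfl
  refine ⟨TExt f, inferInstance,
    { toFun := fun a => ⟨a * (f 1 1)⁻¹, 1⟩, map_one' := ?_, map_mul' := ?_ },
    { toFun := fun e => e.snd, map_one' := rfl, map_mul' := fun _ _ => rfl },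
    ?_, ?_, ?_, ?_, ?_, ?_, ?_⟩
  · exact TExt.ext' (by simp [ofst]) (by simp [osnd])
  · intro a b
    refine TExt.ext' ?_ (by simp [msnd])
    simp only [mfst]
    simp [mul_comm, mul_left_comm, mul_assoc]
  · intro a b h
    have := congrArg TExt.fst h
    simpa using this
  · intro a e
    refine TExt.ext' ?_ (by simp [msnd])
    simp only [mfst, MonoidHom.coe_mk, OneHom.coe_mk, h1, h2]
    simp only [mul_comm, mul_left_comm, mul_assoc]
  · intro g
    exact ⟨⟨1, g⟩, rfl⟩
  · intro e e' h
    change e.snd = e'.snd at h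
    refine ⟨e.fst * e'.fst⁻¹, TExt.ext' ?_ ?_⟩
    · simp only [mfst, MonoidHom.coe_mk, OneHom.coe_mk, h1]
      simp [mul_comm, mul_left_comm, mul_assoc]
    · simpa [msnd] using h
  · intro a; rfl
  · intro e e' h
    change e.snd * e'.snd = e'.snd * e.snd at h
    change e * e' = (⟨f e.snd e'.snd * (f e'.snd e.snd)⁻¹ * (f 1 1)⁻¹, 1⟩ : TExt f) * (e' * e)
    refine TExt.ext' ?_ ?_
    · simp only [mfst, msnd, MonoidHom.coe_mk, OneHom.coe_mk, h1]
      simp [mul_comm, mul_left_comm, mul_assoc]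
    · simpa [msnd] using h
  · rintro ⟨s, hs⟩
    refine ⟨fun g => (s g).fst⁻¹, fun g h => ?_⟩
    have := congrArg TExt.fst (s.map_mul g h)
    have e1 : (s g).snd = g := hs g
    have e2 : (s h).snd = h := hs h
    rw [mfst, e1, e2] at this
    simp only [this]
    simp [mul_comm, mul_left_comm, mul_assoc]

/-- The key computation in the central extension. -/
theorem key {C M E : Type} [CommGroup C] [CommGroup M] [Group E] (σ : MulAut C) (q : ℕ)
    (hq : 2 ≤ q) (hσ : ∀ x, σ x = x ^ q) (c : C) (hc : ∀ x, x ∈ Subgroup.zpowers c)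
    (hord : orderOf c = q ^ 2 - 1)
    (hroot : ∀ m : ℕ, m ≠ 0 → ∀ a : M, ∃ b, b ^ m = a)
    (Z : M →* E) (π : E →* C ⋊[zpowersHom (MulAut C) σ] Multiplicative ℤ)
    (Zinj : Function.Injective Z) (Zc : ∀ a e, Z a * e = e * Z a) (πs : Function.Surjective π)
    (πZ : ∀ e e', π e = π e' → ∃ a, e = Z a * e') (Zπ : ∀ a, π (Z a) = 1) (μ : M)
    (hμ : ∀ e e', π e = SemidirectProduct.inr (Multiplicative.ofAdd 1) →
      π e' = SemidirectProduct.inl (c ^ (q + 1)) → e * e' = Z μ * (e' * e)) :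
    μ ^ (q - 1) = 1 ∧ (μ = 1 → ∃ s : C ⋊[zpowersHom (MulAut C) σ] Multiplicative ℤ →* E,
      ∀ g, π (s g) = g) := by
  obtain ⟨r, rfl⟩ : ∃ r, q = r + 1 := ⟨q - 1, by omega⟩
  have hN : (r + 1) ^ 2 - 1 = r * (r + 2) := by
    have : (r + 1) ^ 2 = r * (r + 2) + 1 := by ring
    omega
  rw [hN] at hord
  have hN0 : r * (r + 2) ≠ 0 := by
    have : r ≠ 0 := by omega
    positivity
  obtain ⟨t, ht⟩ := πs (SemidirectProduct.inr (Multiplicative.ofAdd 1))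
  obtain ⟨d, hd, hdN⟩ : ∃ d, π d = SemidirectProduct.inl c ∧ d ^ (r * (r + 2)) = 1 := by
    obtain ⟨d, hd⟩ := πs (SemidirectProduct.inl c)
    obtain ⟨a, ha⟩ := πZ (d ^ (r * (r + 2))) 1 (by
      rw [map_pow, hd, ← map_pow, ← hord, pow_orderOf_eq_one, map_one, map_one])
    obtain ⟨b, hb⟩ := hroot _ hN0 a⁻¹
    refine ⟨Z b * d, by rw [map_mul, Zπ, one_mul, hd], ?_⟩
    rw [(show Commute (Z b) d from Zc b d).mul_pow, ha, ← map_pow, hb, mul_one, ← map_mul]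
    simp
  have hact : ∀ x : C, SemidirectProduct.inr (Multiplicative.ofAdd (1 : ℤ)) *
      SemidirectProduct.inl x * (SemidirectProduct.inr (Multiplicative.ofAdd (1 : ℤ)))⁻¹ =
      (SemidirectProduct.inl (x ^ (r + 1)) :
        C ⋊[zpowersHom (MulAut C) σ] Multiplicative ℤ) := by
    intro x
    rw [← hσ, ← map_inv, ← SemidirectProduct.inl_aut]
    simp [zpowersHom_apply]
  obtain ⟨l, hl⟩ := πZ (t * d * t⁻¹) (d ^ (r + 1)) (by
    simp only [map_mul, map_inv, map_pow, hd, ht]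
    rw [hact, map_pow])
  have hpow : ∀ m : ℕ, t * d ^ m * t⁻¹ = Z (l ^ m) * d ^ ((r + 1) * m) := by
    intro m
    rw [← conj_pow, hl, (show Commute (Z l) _ from Zc l _).mul_pow, ← map_pow, ← pow_mul]
  have hlN : l ^ (r * (r + 2)) = 1 := by
    have := hpow (r * (r + 2))
    rw [hdN, mul_comm (r + 1), pow_mul d, hdN, one_pow, mul_one, mul_one, mul_inv_cancel] at this
    exact Zinj (by rw [← this, map_one])
  have hμl : μ = l ^ (r + 2) := by
    have h1 := hμ t (d ^ (r + 2)) ht (by rw [map_pow, hd, map_pow])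
    have h2 := hpow (r + 2)
    have h3 : d ^ ((r + 1) * (r + 2)) = d ^ (r + 2) := by
      rw [show (r + 1) * (r + 2) = r * (r + 2) + (r + 2) by ring, pow_add, hdN, one_mul]
    rw [h1, h3] at h2
    apply Zinj
    have h4 : Z μ * (d ^ (r + 2) * t) * t⁻¹ = Z μ * d ^ (r + 2) := by group
    rw [h4] at h2
    exact mul_right_cancel h2
  refine ⟨by rw [hμl, ← pow_mul, Nat.add_sub_cancel, mul_comm, hlN], fun hμ1 => ?_⟩
  obtain ⟨z, hz⟩ := hroot r (by omega) l
  have hzN : z ^ (r * (r + 2)) = 1 := by rw [pow_mul, hz, ← hμl, hμ1]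
  -- the adjusted lift
  obtain ⟨w, hw, hwN, hwt⟩ : ∃ w, π w = SemidirectProduct.inl c ∧ w ^ (r * (r + 2)) = 1 ∧
      t * w * t⁻¹ = w ^ (r + 1) := by
    refine ⟨Z z * d, by rw [map_mul, Zπ, one_mul, hd], ?_, ?_⟩
    · rw [(show Commute (Z z) d from Zc z d).mul_pow, hdN, ← map_pow, hzN, map_one, one_mul]
    · rw [(show Commute (Z z) d from Zc z d).mul_pow, ← map_pow, pow_succ, hz]
      rw [← mul_assoc t, ← Zc z t, mul_assoc (Z z), mul_assoc (Z z), hl, ← mul_assoc, ← map_mul,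
        mul_comm z]
  -- hom from `C`
  have hpw : ∀ a b : ℤ, c ^ a = c ^ b → w ^ a = w ^ b := by
    intro a b h
    have h1 : orderOf w ∣ orderOf c := by rw [hord]; exact orderOf_dvd_of_pow_eq_one hwN
    rw [zpow_eq_zpow_iff_modEq] at h ⊢
    exact h.of_dvd (by exact_mod_cast h1)
  choose e he using fun x => Subgroup.mem_zpowers_iff.1 (hc x)
  let φ : C →* E :=
    { toFun := fun x => w ^ e x
      map_one' := by
        have := hpw (e 1) 0 (by rw [he, zpow_zero])
        simpa using this
      map_mul' := by
        intro x y
        rw [← zpow_add]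
        exact hpw _ _ (by rw [zpow_add, he, he, he]) }
  have hφ : ∀ x, φ x = w ^ e x := fun _ => rfl
  have hφt : ∀ x, φ (σ x) = t * φ x * t⁻¹ := by
    intro x
    rw [hσ, map_pow, hφ, ← conj_zpow, hwt, ← zpow_natCast, ← zpow_natCast, ← zpow_mul, ← zpow_mul,
      mul_comm]
  have hφt' : ∀ x, φ (σ⁻¹ x) = t⁻¹ * φ x * t := by
    intro x
    have h := hφt (σ⁻¹ x)
    rw [MulAut.apply_inv_self] at h
    rw [h]; group
  have hφz : ∀ (m : ℤ) x, φ ((σ ^ m) x) = t ^ m * φ x * (t ^ m)⁻¹ := by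
    intro m
    induction m using Int.induction_on with
    | zero => intro x; simp
    | succ i ih =>
      intro x
      rw [add_comm, zpow_add, MulAut.mul_apply, zpow_one, hφt, ih]; group
    | pred i ih =>
      intro x
      rw [sub_eq_add_neg, add_comm, zpow_add, MulAut.mul_apply, zpow_neg_one, hφt', ih]; group
  refine ⟨SemidirectProduct.lift φ (zpowersHom E t) ?_, ?_⟩
  · intro g
    ext x
    simp only [MonoidHom.comp_apply, MulEquiv.coe_toMonoidHom, zpowersHom_apply, MulAut.conj_apply]
    exact hφz _ x
  · intro g
    rw [SemidirectProduct.lift]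
    simp only [MonoidHom.coe_mk, OneHom.coe_mk, map_mul, hφ, map_zpow, hw, zpowersHom_apply, ht]
    rw [← map_zpow, ← map_zpow, he, ← ofAdd_zsmul]
    simp [SemidirectProduct.inl_left_mul_inr_right]

/-- Existence of cocycles. -/
theorem exists_cocycle {C M : Type} [CommGroup C] [CommGroup M] (σ : MulAut C)
    (χ : C →* M) : ∃ f : (C ⋊[zpowersHom (MulAut C) σ] Multiplicative ℤ) →
        (C ⋊[zpowersHom (MulAut C) σ] Multiplicative ℤ) → M,
      (∀ g h j, f (g * h) j * f g h = f h j * f g (h * j)) ∧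
      ∀ u, f (SemidirectProduct.inr (Multiplicative.ofAdd 1)) (SemidirectProduct.inl u) *
        (f (SemidirectProduct.inl u) (SemidirectProduct.inr (Multiplicative.ofAdd 1)))⁻¹ = χ u := by
  let τ : MulAut (M × C) :=
    { toFun := fun a => (a.1 * χ a.2, σ a.2)
      invFun := fun a => (a.1 * (χ (σ⁻¹ a.2))⁻¹, σ⁻¹ a.2)
      left_inv := fun a => by simp
      right_inv := fun a => by simp
      map_mul' := fun a b => by
        ext
        · simp [mul_comm, mul_left_comm, mul_assoc]
        · simp }
  have hτ : ∀ a, τ a = (a.1 * χ a.2, σ a.2) := fun _ => rfl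
  have hτ' : ∀ a, τ⁻¹ a = (a.1 * (χ (σ⁻¹ a.2))⁻¹, σ⁻¹ a.2) := fun _ => rfl
  have h2 : ∀ (m : ℤ) a, ((τ ^ m) a).2 = (σ ^ m) a.2 ∧ (τ ^ m) (a.1, 1) = (a.1, 1) := by
    intro m
    induction m using Int.induction_on with
    | zero => intro a; simp
    | succ i ih =>
      intro a
      rw [add_comm, zpow_add, zpow_add, MulAut.mul_apply, MulAut.mul_apply, MulAut.mul_apply,
        zpow_one, zpow_one, (ih a).2, hτ, hτ, (ih a).1]
      simp
    | pred i ih =>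
      intro a
      rw [sub_eq_add_neg, add_comm, zpow_add, zpow_add, MulAut.mul_apply, MulAut.mul_apply,
        MulAut.mul_apply, zpow_neg_one, zpow_neg_one, (ih a).2, hτ', hτ', (ih a).1]
      simp
  refine ⟨fun g h => ((τ ^ (Multiplicative.toAdd g.right)) (1, h.left)).1, ?_, ?_⟩
  · intro g h j
    simp only [SemidirectProduct.mul_right, SemidirectProduct.mul_left, toAdd_mul, zpow_add,
      MulAut.mul_apply, zpowersHom_apply]
    generalize Multiplicative.toAdd g.right = m
    generalize Multiplicative.toAdd h.right = n
    have e1 : (τ ^ n) (1, j.left) =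
        (((τ ^ n) (1, j.left)).1, 1) * (1, (σ ^ n) j.left) := by
      ext
      · simp
      · simp [(h2 n _).1]
    have e2 : ((1 : M), h.left * (σ ^ n) j.left) = (1, h.left) * (1, (σ ^ n) j.left) := by
      simp
    rw [e2, map_mul]
    conv_lhs => rw [e1, map_mul, (h2 m (((τ ^ n) (1, j.left)).1, 1)).2]
    simp only [Prod.fst_mul]
    simp only [mul_comm, mul_left_comm, mul_assoc]
  · intro u
    simp [hτ]

theorem comm_aux {C : Type} [CommGroup C] (σ : MulAut C) (y : C) (h : σ y = y) :
    (SemidirectProduct.inr (Multiplicative.ofAdd 1) * SemidirectProduct.inl y :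
      C ⋊[zpowersHom (MulAut C) σ] Multiplicative ℤ) =
    SemidirectProduct.inl y * SemidirectProduct.inr (Multiplicative.ofAdd 1) := by
  refine SemidirectProduct.ext ?_ ?_
  · simp [zpowersHom_apply, h]
  · simp

theorem h2_aux (q : ℕ) (hq : 2 ≤ q) (C : Type) [CommGroup C] [IsCyclic C]
    (hC : Nat.card C = q ^ 2 - 1) (σ : MulAut C) (hσ : ∀ x, σ x = x ^ q) :
    Nonempty
      (H2 (Rep.trivial ℤ (C ⋊[zpowersHom (MulAut C) σ] Multiplicative ℤ)
        (Additive ℂˣ)) ≃+ ZMod (q - 1)) := by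
  obtain ⟨c, hc⟩ := IsCyclic.exists_generator (α := C)
  have hord : orderOf c = q ^ 2 - 1 := by
    rw [← hC]; exact orderOf_eq_card_of_forall_mem_zpowers hc
  have hroot : ∀ m : ℕ, m ≠ 0 → ∀ a : ℂˣ, ∃ b, b ^ m = a := by
    intro m hm a
    obtain ⟨z, hz⟩ := IsAlgClosed.exists_pow_nat_eq (a : ℂ) (Nat.pos_of_ne_zero hm)
    have hz0 : z ≠ 0 := by
      rintro rfl
      rw [zero_pow hm] at hz
      exact a.ne_zero hz.symm
    exact ⟨Units.mk0 z hz0, Units.ext (by simpa using hz)⟩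
  let G := C ⋊[zpowersHom (MulAut C) σ] Multiplicative ℤ
  let A := Rep.trivial ℤ G (Additive ℂˣ)
  let t : G := SemidirectProduct.inr (Multiplicative.ofAdd 1)
  let u : G := SemidirectProduct.inl (c ^ (q + 1))
  have htu : t * u = u * t := by
    have h1 : (c ^ (q + 1)) ^ q = c ^ (q + 1) := by
      rw [← pow_mul]
      have : (q + 1) * q = (q ^ 2 - 1) + (q + 1) := by
        have : 1 ≤ q ^ 2 := Nat.one_le_pow _ _ (by omega)
        zify [this]; ring
      rw [this, pow_add, ← hord, pow_orderOf_eq_one, one_mul]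
    exact comm_aux σ _ ((hσ _).trans h1)
  let F : cocycles₂ A → G → G → ℂˣ := fun f g h => Additive.toMul (f.1 (g, h) : Additive ℂˣ)
  have hF : ∀ f g h j, F f (g * h) j * F f g h = F f h j * F f g (h * j) := by
    intro f g h j
    exact congrArg Additive.toMul ((mem_cocycles₂_iff f.1).1 f.2 g h j)
  let Φ : cocycles₂ A →+ Additive ℂˣ :=
    { toFun := fun f => (f.1 (t, u) : Additive ℂˣ) - (f.1 (u, t) : Additive ℂˣ)
      map_zero' := sub_self _
      map_add' := fun f g => add_sub_add_comm (α := Additive ℂˣ) _ _ _ _ }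
  have hΦ : ∀ f, Additive.toMul (Φ f) = F f t u * (F f u t)⁻¹ := fun f =>
    div_eq_mul_inv (F f t u) (F f u t)
  have hmain : ∀ f, (F f t u * (F f u t)⁻¹) ^ (q - 1) = 1 ∧
      (F f t u * (F f u t)⁻¹ = 1 → ∃ x : G → ℂˣ, ∀ g h, x h * (x (g * h))⁻¹ * x g = F f g h) := by
    intro f
    obtain ⟨E, _, Z, π, Zinj, Zc, πs, πZ, Zπ, hcomm, hs⟩ := exists_ext (F f) (hF f)
    have := key σ q hq hσ c hc hord hroot Z π Zinj Zc πs πZ Zπ (F f t u * (F f u t)⁻¹) (by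
      intro e e' he he'
      have := hcomm e e' (by rw [he, he']; exact htu)
      rwa [he, he'] at this)
    exact ⟨this.1, fun h => hs (this.2 h)⟩
  have hcob : ∀ f : cocycles₂ A, Φ f = 0 ↔ f.1 ∈ coboundaries₂ A := by
    intro f
    constructor
    · intro h
      have h' : F f t u * (F f u t)⁻¹ = 1 := by rw [← hΦ, h]; rfl
      obtain ⟨x, hx⟩ := (hmain f).2 h'
      refine ⟨fun g => (Additive.ofMul (x g) : Additive ℂˣ), ?_⟩
      funext gh
      obtain ⟨g, h⟩ := gh
      have := congrArg Additive.ofMul (hx g h)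
      rw [div_eq_mul_inv .. |>.symm] at this
      exact this
    · rintro ⟨x, hx⟩
      have e1 : ∀ g h, (f.1 (g, h) : Additive ℂˣ) =
          (x h : Additive ℂˣ) - (x (g * h) : Additive ℂˣ) + (x g : Additive ℂˣ) := by
        intro g h
        exact (congrFun hx (g, h)).symm
      change (f.1 (t, u) : Additive ℂˣ) - (f.1 (u, t) : Additive ℂˣ) = 0
      rw [e1, e1, htu]
      abel
  let R : AddSubgroup (Additive ℂˣ) := (rootsOfUnity (q - 1) ℂ).toAddSubgroup
  have hrange : ∀ f, Φ f ∈ R := by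
    intro f
    change Additive.toMul (Φ f) ^ (q - 1) = 1
    rw [hΦ]; exact (hmain f).1
  let Ψ : cocycles₂ A →+ R := Φ.codRestrict R hrange
  have hΨs : Function.Surjective Ψ := by
    rintro ⟨μ, hμ⟩
    have hμ' : (Additive.toMul μ) ^ (q - 1) = 1 := hμ
    obtain ⟨l, hl⟩ := hroot (q + 1) (by omega) (Additive.toMul μ)
    have hlN : l ^ Nat.card C = 1 := by
      rw [hC, show q ^ 2 - 1 = (q + 1) * (q - 1) from Nat.sq_sub_sq q 1, pow_mul, hl, hμ']
    let χ : C →* ℂˣ := monoidHomOfForallMemZpowers hc (g' := l) (by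
      rw [orderOf_eq_card_of_forall_mem_zpowers hc]; exact orderOf_dvd_of_pow_eq_one hlN)
    have hχ : χ c = l := monoidHomOfForallMemZpowers_apply_gen hc _
    obtain ⟨f, hf, hfu⟩ := exists_cocycle σ χ
    refine ⟨⟨fun gh => (Additive.ofMul (f gh.1 gh.2) : Additive ℂˣ), ?_⟩, ?_⟩
    · refine (mem_cocycles₂_iff _).2 fun g h j => ?_
      exact congrArg Additive.ofMul (hf g h j)
    · apply Subtype.ext
      have := hfu (c ^ (q + 1))
      rw [map_pow χ, hχ, hl] at this
      exact (div_eq_mul_inv (f t u) (f u t)).trans this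
  let P : cocycles₂ A →+ H2 A := (H2π A).hom.toAddMonoidHom
  have hPs : Function.Surjective P := (ModuleCat.epi_iff_surjective (H2π A)).1 inferInstance
  have hker : P.ker = Ψ.ker := by
    ext f
    rw [AddMonoidHom.mem_ker, AddMonoidHom.mem_ker]
    have h1 : P f = 0 ↔ f.1 ∈ coboundaries₂ A := H2π_eq_zero_iff f
    have h2 : Ψ f = 0 ↔ Φ f = 0 := Subtype.ext_iff
    rw [h1, h2, hcob]
  haveI : NeZero (q - 1) := ⟨by omega⟩
  haveI : IsAddCyclic R := inferInstanceAs (IsAddCyclic (Additive (rootsOfUnity (q - 1) ℂ)))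
  have hcard : Nat.card R = q - 1 := by
    change Nat.card (rootsOfUnity (q - 1) ℂ) = q - 1
    exact Complex.card_rootsOfUnity _
  have e := (QuotientAddGroup.quotientKerEquivOfSurjective P hPs).symm.trans
    ((QuotientAddGroup.quotientAddEquivOfEq hker).trans
      ((QuotientAddGroup.quotientKerEquivOfSurjective Ψ hΨs).trans
        (zmodAddCyclicAddEquiv (G := R) inferInstance).symm))
  rw [hcard] at e
  exact ⟨e⟩

/-- For `q = pⁿ` (`p` an odd prime) and `k` the field with `q²` elements, the second
cohomology of `G = kˣ ⋊ ℤ` (where `m ∈ ℤ` acts by the `m`-th power of `x ↦ x^q`) with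
trivial coefficients `ℂˣ` is isomorphic to `ℤ/(q−1)ℤ`. -/
theorem h2_semidirect_cunits (p n : ℕ) (hp : p.Prime) (hodd : Odd p) (hn : 0 < n)
    (k : Type) [Field k] [Fintype k] (hk : Fintype.card k = (p ^ n) ^ 2)
    (σ : MulAut kˣ) (hσ : ∀ x : kˣ, σ x = x ^ (p ^ n)) :
    Nonempty
      (H2 (Rep.trivial ℤ (kˣ ⋊[zpowersHom (MulAut kˣ) σ] Multiplicative ℤ)
        (Additive ℂˣ)) ≃+ ZMod (p ^ n - 1)) := by
  refine h2_aux (p ^ n) ?_ kˣ ?_ σ hσ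
  · exact hp.two_le.trans (Nat.le_self_pow hn.ne' p)
  · rw [Nat.card_units, Nat.card_eq_fintype_card, hk]
end
end
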